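/- Given modular data (I, 0, *, N, s), there exists a root of unity ξ ∈ ℂ (i.e. ξ^n = 1 for some integer n ≥ 1) such that every entry s_{ij} lies in the subfield ℚ(ξ) of ℂ; that is, all entries of the S-matrix lie in a cyclotomic field. -/

import Mathlib

/-!
The entries of the S-matrix generate a finite abelian extension of `ℚ`, so the result follows from
the Kronecker–Weber theorem.

*The field of entries.* By the Verlinde relation each column `j` gives a character
`χ_j(i) = s i j / s 0 j` of the fusion ring, with algebraic integer values, and `s ^ 2 = (star)`
gives `(s 0 j) ^ 2 * ∑ k, χ_j(k) χ_j(k*) = 1`. Every embedding `ψ` of the field of entries in `ℂ`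
permutes the characters, whence `ψ (s i j) = ± s i (π j)` (`ModularData.galois_action`). So the field
is normal over `ℚ`, and since `s` is symmetric two automorphisms may be applied one to the row index
and one to the column index; they commute (`ModularData.comm_field`).

*Kronecker–Weber.* Let `F` be an abelian number field, `m = 2 * |discr F| * [F : ℚ]`, `n = m ^ 3`, and
`L = F(ζ)` with `ζ` a primitive `n`-th root of unity. It suffices to show `[L : ℚ] ≤ φ(n)`, because
then `L = ℚ(ζ)`. By Minkowski's discriminant bound the inertia groups, one for each prime number,
generate the Galois group of `L` (`NFLoc.eq_top_of_In_le`), and they are trivial at primes not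
dividing `n`, so it is enough to bound inertia at each `p ∣ n` by `φ(p ^ e)`, `e = v_p(n)`.

* As the Galois group is abelian, a Frobenius commutes with inertia. This forces the tame character
  `σ ↦ σ π / π` to have values in the `(p - 1)`-st roots of unity (`DVal.Loc.ratio_pow`), hence
  inertia subgroups of order prime to `p` have at most `p - 1` elements (`DVal.Loc.card_le`).
* For odd `p`, inertia has no quotient `(ℤ/p)²`. In such an extension, with group `I` and uniformizer
  `π`, the Frobenius again makes the coefficients of `(σ - 1) π` modulo `π ^ 3` satisfy an equation of
  degree `p`, so some `σ ≠ 1` acts trivially modulo `π ^ 3`. For `τ ∈ I` outside `⟨σ⟩`, let `ϖ` be the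
  `τ`-norm of `π`. Then `σ - 1` raises valuations on the fixed field of `τ` by at least twice that of
  `ϖ`, so the trace of `ϖ` down to the base has the valuation of `p * ϖ`, which is not a multiple of
  the ramification index `p ^ 2` (`DVal.Loc.wild`). Therefore the `p`-part of inertia is cyclic, and
  by the choice of `n` its exponent divides `p ^ (e - 1)` (`NFLoc.card_In_le`).
* For `p = 2` inertia is a `2`-group of exponent dividing `2 ^ (e - 2)`, but not cyclic. Let `H` be
  generated by complex conjugation and the inertia groups at odd primes. A subgroup of index two
  containing `H` cuts out a real quadratic field unramified outside `2`, which is `ℚ(√2)`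
  (`NFLoc.exists_sqrt_two`). So one element of inertia at `2` moving `√2` generates, together with
  `H`, the whole Galois group, and the contribution of `2` is at most `2 * 2 ^ (e - 2) = φ(2 ^ e)`
  (`NFLoc.card_gal_le`).
-/

open scoped BigOperators

/-- Modular data: a fusion ring given by structure constants `N` on a finite index set
`I` with unit index `one` and duality involution `star`, together with a complex
S-matrix `s` which is symmetric, compatible with duality, has nonvanishing first row,
squares to the duality permutation, satisfies the Verlinde formula, and whose column
ratios exhaust the characters of the fusion ring. -/
structure ModularData (I : Type) [Fintype I] [DecidableEq I] where
  one : I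
  star : I → I
  N : I → I → I → ℕ
  s : I → I → ℂ
  star_involutive : Function.Involutive star
  star_one : star one = one
  assoc : ∀ i j l m, ∑ k, N i j k * N k l m = ∑ k, N j l k * N i k m
  one_mul' : ∀ i j, N one i j = (if i = j then 1 else 0)
  mul_one' : ∀ i j, N i one j = (if i = j then 1 else 0)
  dual : ∀ i j, N i j one = (if j = star i then 1 else 0)
  s_symm : ∀ i j, s i j = s j i
  s_star : ∀ i j, s i j = s (star i) (star j)
  s_one_ne_zero : ∀ i, s one i ≠ 0
  s_mul_s : ∀ i j, ∑ k, s i k * s k j = (if j = star i then 1 else 0)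
  verlinde : ∀ i j r, s one r * ∑ k, (N i j k : ℂ) * s k r = s i r * s j r
  char_column : ∀ f : I → ℂ, f one = 1 →
    (∀ i j, f i * f j = ∑ k, (N i j k : ℂ) * f k) →
    ∃ j, ∀ i, f i = s i j / s one j

/-! ### Discrete valuations -/

/-- An integer-valued valuation on a field, written additively. The value `v 0` carries no meaning. -/
structure DVal (K : Type*) [Field K] where
  v : K → ℤ
  v_mul : ∀ x y, x ≠ 0 → y ≠ 0 → v (x * y) = v x + v y
  v_add : ∀ x y, x ≠ 0 → y ≠ 0 → x + y ≠ 0 → min (v x) (v y) ≤ v (x + y)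

namespace DVal

variable {K : Type*} [Field K] (w : DVal K)

lemma v_one : w.v 1 = 0 := by
  have := w.v_mul 1 1 one_ne_zero one_ne_zero
  simp at this; exact this

lemma v_neg_one : w.v (-1) = 0 := by
  have := w.v_mul (-1) (-1) (by simp) (by simp)
  simp [w.v_one] at this; omega

lemma v_neg (x : K) : w.v (-x) = w.v x := by
  by_cases h : x = 0
  · simp [h]
  · have := w.v_mul (-1) x (by simp) h
    simpa [w.v_neg_one] using this

lemma v_inv {x : K} (h : x ≠ 0) : w.v x⁻¹ = - w.v x := by
  have := w.v_mul x x⁻¹ h (inv_ne_zero h)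
  rw [mul_inv_cancel₀ h, w.v_one] at this; linarith

lemma v_div {x y : K} (hx : x ≠ 0) (hy : y ≠ 0) : w.v (x / y) = w.v x - w.v y := by
  rw [div_eq_mul_inv, w.v_mul _ _ hx (inv_ne_zero hy), w.v_inv hy]; ring

lemma v_zpow {x : K} (hx : x ≠ 0) (n : ℤ) : w.v (x ^ n) = n * w.v x := by
  induction n using Int.induction_on with
  | zero => simp [w.v_one]
  | succ n ih => rw [zpow_add_one₀ hx, w.v_mul _ _ (zpow_ne_zero _ hx) hx, ih]; ring
  | pred n ih =>
    rw [zpow_sub_one₀ hx, w.v_mul _ _ (zpow_ne_zero _ hx) (inv_ne_zero hx), ih, w.v_inv hx]; ring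

lemma v_prod {ι : Type*} (s : Finset ι) (f : ι → K) (h : ∀ i ∈ s, f i ≠ 0) :
    w.v (∏ i ∈ s, f i) = ∑ i ∈ s, w.v (f i) := by
  classical
  induction s using Finset.induction_on with
  | empty => simp [w.v_one]
  | insert a s ha ih =>
    rw [Finset.prod_insert ha, Finset.sum_insert ha, w.v_mul, ih]
    · exact fun i hi => h i (Finset.mem_insert_of_mem hi)
    · exact h a (Finset.mem_insert_self _ _)
    · exact Finset.prod_ne_zero_iff.2 fun i hi => h i (Finset.mem_insert_of_mem hi)

/-- The fractional ideal of elements of valuation at least `n`. -/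
def B (n : ℤ) : AddSubgroup K where
  carrier := {x | x = 0 ∨ n ≤ w.v x}
  zero_mem' := Or.inl rfl
  add_mem' := by
    rintro x y hx hy
    by_cases h1 : x = 0
    · subst h1; simpa using hy
    by_cases h2 : y = 0
    · subst h2; simpa using hx
    by_cases h3 : x + y = 0
    · exact Or.inl h3
    · have := w.v_add x y h1 h2 h3
      right
      have a := hx.resolve_left h1
      have b := hy.resolve_left h2
      exact (le_min a b).trans this
  neg_mem' := by
    rintro x (h | h)
    · left; simp [h]
    · right; rw [w.v_neg]; exact h

lemma mem_B {n : ℤ} {x : K} : x ∈ w.B n ↔ x = 0 ∨ n ≤ w.v x := Iff.rfl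

lemma le_v {n : ℤ} {x : K} (hx : x ≠ 0) (h : x ∈ w.B n) : n ≤ w.v x := h.resolve_left hx

lemma B_of_le {n : ℤ} {x : K} (h : n ≤ w.v x) : x ∈ w.B n := Or.inr h

lemma B_mono {m n : ℤ} (h : m ≤ n) {x : K} (hx : x ∈ w.B n) : x ∈ w.B m :=
  hx.imp_right h.trans

lemma B_mul {m n : ℤ} {x y : K} (hx : x ∈ w.B m) (hy : y ∈ w.B n) : x * y ∈ w.B (m + n) := by
  by_cases h1 : x = 0
  · left; simp [h1]
  by_cases h2 : y = 0
  · left; simp [h2]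
  right; rw [w.v_mul _ _ h1 h2]; exact add_le_add (w.le_v h1 hx) (w.le_v h2 hy)

lemma B_mul' {k m n : ℤ} {x y : K} (hx : x ∈ w.B m) (hy : y ∈ w.B n) (h : k ≤ m + n) :
    x * y ∈ w.B k := w.B_mono h (w.B_mul hx hy)

lemma one_mem_B : (1 : K) ∈ w.B 0 := Or.inr w.v_one.ge

lemma B_pow {x : K} {m : ℤ} (hx : x ∈ w.B m) (k : ℕ) : x ^ k ∈ w.B (k * m) := by
  induction k with
  | zero => simpa using w.one_mem_B
  | succ k ih => rw [pow_succ]; exact w.B_mul' ih hx (by push_cast; linarith)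

lemma natCast_mem_B (n : ℕ) : (n : K) ∈ w.B 0 := by
  induction n with
  | zero => simp
  | succ n ih => push_cast; exact add_mem ih w.one_mem_B

lemma v_add_eq {x y : K} (hx : x ≠ 0) (hy : y ∈ w.B (w.v x + 1)) :
    x + y ≠ 0 ∧ w.v (x + y) = w.v x := by
  have h0 : x + y ≠ 0 := by
    intro h
    have : x ∈ w.B (w.v x + 1) := by
      have h' := neg_mem hy
      rwa [← eq_neg_of_add_eq_zero_left h] at h'
    have := w.le_v hx this
    omega
  refine ⟨h0, le_antisymm ?_ ?_⟩
  · by_contra! hlt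
    have h1 : x + y ∈ w.B (w.v x + 1) := w.B_of_le (by omega)
    have : x ∈ w.B (w.v x + 1) := by simpa using sub_mem h1 hy
    have := w.le_v hx this
    omega
  · exact w.le_v h0 (add_mem (w.B_of_le le_rfl) (w.B_mono (by omega) hy))

/-- The valuation ring. -/
def O : Subring K where
  carrier := w.B 0
  mul_mem' hx hy := by simpa using w.B_mul hx hy
  one_mem' := w.one_mem_B
  add_mem' := add_mem
  zero_mem' := zero_mem _
  neg_mem' := neg_mem

/-- The maximal ideal of the valuation ring. -/
def m : Ideal w.O where
  carrier := {x | (x : K) ∈ w.B 1}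
  add_mem' hx hy := (w.B 1).add_mem hx hy
  zero_mem' := zero_mem (w.B 1)
  smul_mem' c x hx := by
    have : (c : K) * x ∈ w.B 1 := w.B_mul' c.2 hx (by simp)
    simpa using this

lemma mem_m {x : w.O} : x ∈ w.m ↔ (x : K) ∈ w.B 1 := Iff.rfl

instance : w.m.IsPrime := by
  refine Ideal.isPrime_iff.2 ⟨?_, ?_⟩
  · intro h
    have : (1 : w.O) ∈ w.m := by rw [h]; trivial
    have := w.le_v (x := (1 : K)) one_ne_zero this
    rw [w.v_one] at this; omega
  · rintro ⟨x, hx⟩ ⟨y, hy⟩ h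
    by_cases h1 : x = 0
    · left; subst h1; exact zero_mem _
    by_cases h2 : y = 0
    · right; subst h2; exact zero_mem _
    have := w.le_v (x := x * y) (mul_ne_zero h1 h2) h
    rw [w.v_mul _ _ h1 h2] at this
    have a := w.le_v h1 hx
    have b := w.le_v h2 hy
    by_cases h3 : 1 ≤ w.v x
    · left; exact w.B_of_le h3
    · right
      have h4 : 1 ≤ w.v y := by omega
      exact w.B_of_le h4

/-- A family of more than `d` integral elements whose residues are roots of a fixed nonzero
polynomial of degree at most `d` over the residue ring contains two congruent elements. -/
lemma exists_congr {ι : Type*} [Fintype ι] (f : ι → w.O) (g : Polynomial (w.O ⧸ w.m)) (hg : g ≠ 0)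
    (hr : ∀ i, g.eval (Ideal.Quotient.mk w.m (f i)) = 0) (hc : g.natDegree < Fintype.card ι) :
    ∃ i j, i ≠ j ∧ (f i : K) - f j ∈ w.B 1 := by
  classical
  obtain ⟨i, -, j, -, hij, h⟩ := Finset.exists_ne_map_eq_of_card_lt_of_maps_to
    (s := (Finset.univ : Finset ι)) (t := g.roots.toFinset)
    (f := fun i => Ideal.Quotient.mk w.m (f i))
    (by
      refine lt_of_le_of_lt ?_ hc
      exact (Multiset.toFinset_card_le _).trans (Polynomial.card_roots' g))
    (by intro i _; simp [hg, hr i])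
  refine ⟨i, j, hij, ?_⟩
  rw [Ideal.Quotient.eq] at h
  exact h

end DVal

/-! ### Automorphisms and the ramification filtration -/

namespace DVal

variable {K : Type*} [Field K] (w : DVal K)

/-- `σ` preserves the valuation. -/
def Inv (σ : RingAut K) : Prop := ∀ x, w.v (σ x) = w.v x

/-- `σ - 1` raises the valuation of every element by at least `n`. -/
def Gain (σ : RingAut K) (n : ℤ) : Prop := ∀ m x, x ∈ w.B m → σ x - x ∈ w.B (m + n)

variable {w}

lemma Inv.map_B {σ : RingAut K} (h : w.Inv σ) {n : ℤ} {x : K} (hx : x ∈ w.B n) :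
    σ x ∈ w.B n := by
  rcases hx with rfl | hx
  · simp
  · exact Or.inr (by rw [h]; exact hx)

lemma Inv.inv {σ : RingAut K} (h : w.Inv σ) : w.Inv σ⁻¹ := fun x => by
  have := h (σ⁻¹ x)
  rw [← RingAut.mul_apply] at this
  simpa using this.symm

lemma Inv.mul {σ τ : RingAut K} (h : w.Inv σ) (h' : w.Inv τ) : w.Inv (σ * τ) := fun x => by
  rw [RingAut.mul_apply, h, h']

lemma Inv.pow {σ : RingAut K} (h : w.Inv σ) (n : ℕ) : w.Inv (σ ^ n) := by
  induction n with
  | zero => intro x; simp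
  | succ n ih => rw [pow_succ]; exact ih.mul h

lemma Inv.good_mul {σ : RingAut K} (h : w.Inv σ) {n : ℤ} {x y : K} (hx0 : x ≠ 0) (hy0 : y ≠ 0)
    (hx : σ x - x ∈ w.B (w.v x + n)) (hy : σ y - y ∈ w.B (w.v y + n)) :
    σ (x * y) - x * y ∈ w.B (w.v (x * y) + n) := by
  have e : σ (x * y) - x * y = σ x * (σ y - y) + (σ x - x) * y := by rw [map_mul]; ring
  rw [e, w.v_mul _ _ hx0 hy0]
  refine add_mem (w.B_mul' (h.map_B (w.B_of_le le_rfl)) hy (by linarith))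
    (w.B_mul' hx (w.B_of_le le_rfl) (by linarith))

lemma Inv.good_inv {σ : RingAut K} (h : w.Inv σ) {n : ℤ} {x : K} (hx0 : x ≠ 0)
    (hx : σ x - x ∈ w.B (w.v x + n)) : σ x⁻¹ - x⁻¹ ∈ w.B (w.v x⁻¹ + n) := by
  have hs : σ x ≠ 0 := by simpa using hx0
  have e : σ x⁻¹ - x⁻¹ = -((σ x - x) * ((σ x)⁻¹ * x⁻¹)) := by
    rw [map_inv₀]; field_simp; ring
  rw [e]
  refine neg_mem (w.B_mul' hx (w.B_mul (w.B_of_le le_rfl) (w.B_of_le le_rfl)) ?_)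
  rw [w.v_inv hs, w.v_inv hx0, h]; linarith

lemma Inv.good_zpow {σ : RingAut K} (h : w.Inv σ) {n : ℤ} {x : K} (hx0 : x ≠ 0)
    (hx : σ x - x ∈ w.B (w.v x + n)) (k : ℤ) : σ (x ^ k) - x ^ k ∈ w.B (w.v (x ^ k) + n) := by
  induction k using Int.induction_on with
  | zero => simp
  | succ k ih => rw [zpow_add_one₀ hx0]; exact h.good_mul (zpow_ne_zero _ hx0) hx0 ih hx
  | pred k ih =>
    rw [zpow_sub_one₀ hx0]
    exact h.good_mul (zpow_ne_zero _ hx0) (inv_ne_zero hx0) ih (h.good_inv hx0 hx)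

/-- The gain can be tested on a uniformizer and on units. -/
lemma Inv.gain {σ : RingAut K} (h : w.Inv σ) {n : ℤ} {π : K} (hπ0 : π ≠ 0) (hπ : w.v π = 1)
    (hgπ : σ π - π ∈ w.B (1 + n)) (hu : ∀ u, w.v u = 0 → u ≠ 0 → σ u - u ∈ w.B n) :
    w.Gain σ n := by
  intro m x hx
  by_cases hx0 : x = 0
  · simp [hx0]
  have hm := w.le_v hx0 hx
  have hz : π ^ w.v x ≠ 0 := zpow_ne_zero _ hπ0
  have hvz : w.v (π ^ w.v x) = w.v x := by rw [w.v_zpow hπ0, hπ, mul_one]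
  have hq0 : x / π ^ w.v x ≠ 0 := div_ne_zero hx0 hz
  have hq : w.v (x / π ^ w.v x) = 0 := by rw [w.v_div hx0 hz, hvz, sub_self]
  have e : π ^ w.v x * (x / π ^ w.v x) = x := by field_simp
  have := h.good_mul hz hq0 (n := n) (h.good_zpow hπ0 (by rwa [hπ]) _)
    (by rw [hq, zero_add]; exact hu _ hq hq0)
  rw [e] at this
  exact w.B_mono (by linarith) this

/-- When `q` has valuation at least `s`, expanding `(a + (σ a - a)) ^ q` shows that `σ - 1` is small
of order `2 * s` on `a ^ q`; so an estimate of order `s` for `σ - 1` on `a` improves to `2 * s` once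
`a ^ q - a` satisfies the latter. It is applied with `q` the size of the residue field. -/
lemma unit_gain {σ : RingAut K} {s : ℤ} (hs : 0 ≤ s) {q : ℕ} (hq : (q : K) ∈ w.B s) {a : K}
    (ha : a ∈ w.B 0) (hc : σ a - a ∈ w.B s)
    (hb : σ (a ^ q - a) - (a ^ q - a) ∈ w.B (2 * s)) : σ a - a ∈ w.B (2 * s) := by
  let a' : w.O := ⟨a, ha⟩
  let c' : w.O := ⟨σ a - a, w.B_mono hs hc⟩
  obtain ⟨k, hk⟩ := Polynomial.powAddExpansion a' c' q
  have hk' : (a + (σ a - a)) ^ q =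
      a ^ q + q * a ^ (q - 1) * (σ a - a) + k * (σ a - a) ^ 2 := by
    have := congrArg (fun z : w.O => (z : K)) hk
    simpa [a', c'] using this
  have e : σ a - a = (q * a ^ (q - 1) * (σ a - a) + k * (σ a - a) ^ 2) -
      (σ (a ^ q - a) - (a ^ q - a)) := by
    rw [map_sub, map_pow]
    have : σ a ^ q = (a + (σ a - a)) ^ q := by ring_nf
    rw [this, hk']; ring
  rw [e]
  refine sub_mem (add_mem ?_ ?_) hb
  · refine w.B_mul' (w.B_mul hq (w.B_pow ha _)) hc ?_
    simp; linarith
  · refine w.B_mul' k.2 (w.B_pow hc 2) ?_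
    push_cast; linarith

lemma end_mul_apply {M : Type*} [AddCommGroup M] (f g : AddMonoid.End M) (x : M) :
    (f * g) x = f (g x) := rfl

/-- The norm element `1 + τ + ⋯ + τ ^ (p - 1)` expressed through powers of `τ - 1`. -/
lemma sum_pow_eq {M : Type*} [AddCommGroup M] (τ : AddMonoid.End M) (p : ℕ) (x : M) :
    ∑ j ∈ Finset.range p, (τ ^ j) x =
      ∑ k ∈ Finset.range p, (p.choose (k + 1)) • (((τ - 1) ^ k) x) := by
  have h := congrArg (Polynomial.aeval (τ - 1))
    (Polynomial.geom_sum_X_comp_X_add_one_eq_sum (R := ℤ) p)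
  rw [Polynomial.aeval_comp] at h
  simp only [map_sum, map_pow, map_add, Polynomial.aeval_X, map_one, sub_add_cancel, map_mul,
    map_natCast] at h
  have hs : ∀ f : ℕ → AddMonoid.End M,
      (∑ j ∈ Finset.range p, f j) x = ∑ j ∈ Finset.range p, f j x := fun f =>
    AddMonoidHom.finsetSum_apply f (Finset.range p) x
  have h2 := congrArg (fun f : AddMonoid.End M => f x) h
  simp only [hs] at h2
  exact h2

/-- The filtration of the units of the valuation ring by congruence to `1`. -/
def U (w : DVal K) (n : ℤ) : Subgroup Kˣ where
  carrier := {u | w.v u = 0 ∧ (u : K) - 1 ∈ w.B n}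
  one_mem' := by simp [w.v_one]
  mul_mem' := by
    rintro a b ⟨ha, ha'⟩ ⟨hb, hb'⟩
    refine ⟨by rw [Units.val_mul, w.v_mul _ _ a.ne_zero b.ne_zero, ha, hb]; rfl, ?_⟩
    have e : ((a * b : Kˣ) : K) - 1 = a * (b - 1) + (a - 1) := by push_cast; ring
    rw [e]
    exact add_mem (w.B_mul' (w.B_of_le ha.ge) hb' (by simp)) ha'
  inv_mem' := by
    rintro a ⟨ha, ha'⟩
    have hv : w.v ((a⁻¹ : Kˣ) : K) = 0 := by
      rw [Units.val_inv_eq_inv_val, w.v_inv a.ne_zero, ha]; rfl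
    refine ⟨hv, ?_⟩
    have e : ((a⁻¹ : Kˣ) : K) - 1 = -((a⁻¹ : Kˣ) * (a - 1)) := by
      rw [mul_sub, Units.inv_mul]; ring
    rw [e]
    exact neg_mem (w.B_mul' (w.B_of_le hv.ge) ha' (by simp))

lemma mem_U {n : ℤ} {u : Kˣ} : u ∈ w.U n ↔ w.v u = 0 ∧ (u : K) - 1 ∈ w.B n := Iff.rfl

lemma U_mono {m n : ℤ} (h : m ≤ n) {u : Kˣ} (hu : u ∈ w.U n) : u ∈ w.U m :=
  ⟨hu.1, w.B_mono h hu.2⟩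

/-- When `p` has valuation at least `p ^ 2`, the binomial expansion of `(1 + c) ^ p` is dominated by
`1 + c ^ p`, up to the precision `p + 1` needed below. -/
lemma U_pow_prime {p : ℕ} (hp : p.Prime) (hvp : (p : K) ∈ w.B (p ^ 2)) {u : Kˣ} (hu : u ∈ w.U 2) :
    u ^ p ∈ w.U (p + 1) := by
  have h2 := hp.two_le
  refine ⟨((w.U 2).pow_mem hu p).1, ?_⟩
  obtain ⟨hu0, hu2⟩ := hu
  let c : w.O := ⟨u - 1, w.B_mono (by norm_num) hu2⟩
  obtain ⟨r, hr⟩ := exists_add_pow_prime_eq hp 1 c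
  have hr' : (u : K) ^ p = 1 + (u - 1) ^ p + p * (u - 1) * r := by
    have := congrArg (fun z : w.O => (z : K)) hr
    simpa [c] using this
  rw [Units.val_pow_eq_pow_val, hr']
  have e : 1 + ((u : K) - 1) ^ p + p * (u - 1) * r - 1 = (u - 1) ^ p + p * (u - 1) * r := by ring
  rw [e]
  refine add_mem (w.B_mono ?_ (w.B_pow hu2 p)) (w.B_mul' (w.B_mul hvp hu2) r.2 ?_)
  · have : (2 : ℤ) ≤ p := by exact_mod_cast h2
    linarith
  · have : (2 : ℤ) ≤ p := by exact_mod_cast h2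
    nlinarith

/-- The norm `u * τ u * ⋯ * τ ^ (p - 1) u` of a unit congruent to `1` modulo the square of the maximal
ideal, for a wild automorphism `τ`. -/
lemma norm_mem {p : ℕ} (hp : p.Prime) (hvp : (p : K) ∈ w.B (p ^ 2)) {τ : RingAut K}
    (hτ : w.Inv τ) (hg : w.Gain τ 1) {u : K} (hu0 : w.v u = 0) (hu1 : u ≠ 0)
    (hu : u - 1 ∈ w.B 2) :
    ∏ j ∈ Finset.range p, (τ ^ j) u - 1 ∈ w.B (p + 1) := by
  let T : AddMonoid.End (Additive Kˣ) :=
    MonoidHom.toAdditive (Units.mapEquiv (τ : K ≃* K)).toMonoidHom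
  let U' : Additive Kˣ := Additive.ofMul (Units.mk0 u hu1)
  have hTapp : ∀ (n : ℕ) (x : Additive Kˣ),
      (((T ^ n) x).toMul : K) = (τ ^ n) (x.toMul : K) := by
    intro n
    induction n with
    | zero => intro x; simp
    | succ n ih =>
      intro x
      rw [pow_succ, pow_succ, end_mul_apply, ih, RingAut.mul_apply]
      rfl
  have hstep : ∀ (n : ℤ) (x : Additive Kˣ), x.toMul ∈ w.U n →
      ((T - 1) x).toMul ∈ w.U (n + 1) := by
    intro n x hx
    have e1 : (((T - 1) x).toMul : K) = τ (x.toMul : K) / (x.toMul : K) := by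
      have : (T - 1) x = T x - x := rfl
      rw [this, toMul_sub, Units.val_div_eq_div_val]
      rfl
    have hx0 : (x.toMul : K) ≠ 0 := Units.ne_zero _
    have hτ0 : τ (x.toMul : K) ≠ 0 := by simp
    refine ⟨by rw [e1, w.v_div hτ0 hx0, hτ, sub_self], ?_⟩
    have e2 : τ (x.toMul : K) / (x.toMul : K) - 1 =
        (τ ((x.toMul : K) - 1) - ((x.toMul : K) - 1)) * (x.toMul : K)⁻¹ := by
      rw [map_sub, map_one]; field_simp; ring
    rw [e1, e2]
    refine w.B_mul' (hg n _ hx.2) (w.B_of_le (n := 0) ?_) (by simp)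
    rw [w.v_inv hx0, hx.1]; rfl
  have hiter : ∀ k : ℕ, (((T - 1) ^ k) U').toMul ∈ w.U (2 + k) := by
    intro k
    induction k with
    | zero => exact ⟨hu0, by simpa [U'] using hu⟩
    | succ k ih =>
      rw [pow_succ', end_mul_apply]
      have := hstep _ _ ih
      exact U_mono (by push_cast; linarith) this
  have key : (∑ j ∈ Finset.range p, (T ^ j) U').toMul ∈ w.U (p + 1) := by
    rw [sum_pow_eq, toMul_sum]
    refine Subgroup.prod_mem _ fun k hk => ?_
    rw [Finset.mem_range] at hk
    rw [toMul_nsmul]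
    by_cases hk1 : k + 1 = p
    · rw [hk1, Nat.choose_self, pow_one]
      exact U_mono (by push_cast [← hk1]; linarith) (hiter k)
    · obtain ⟨c, hc⟩ := hp.dvd_choose_self (k := k + 1) (by omega) (by omega)
      rw [hc, pow_mul]
      exact Subgroup.pow_mem _ (U_pow_prime hp hvp (U_mono (by simp) (hiter k))) _
  have e : (((∑ j ∈ Finset.range p, (T ^ j) U').toMul : Kˣ) : K) =
      ∏ j ∈ Finset.range p, (τ ^ j) u := by
    rw [toMul_sum, Units.coe_prod]
    exact Finset.prod_congr rfl fun j _ => hTapp j U'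
  rw [← e]
  exact key.2

end DVal

/-! ### Tame inertia -/

namespace DVal

variable {K : Type*} [Field K] {w : DVal K}

/-- Local data at a prime of residue characteristic `p`: a group `I` of inertial automorphisms, a
Frobenius element `φ` commuting with `I`, and a uniformizer `π`. -/
structure Loc (w : DVal K) (I : Subgroup (RingAut K)) (φ : RingAut K) (p : ℕ) (π : K) : Prop where
  hp : p.Prime
  inv : ∀ σ ∈ I, w.Inv σ
  inv_frob : w.Inv φ
  comm : ∀ σ ∈ I, ∀ x, φ (σ x) = σ (φ x)
  inertia : ∀ σ ∈ I, ∀ x ∈ w.B 0, σ x - x ∈ w.B 1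
  frob : ∀ x ∈ w.B 0, φ x - x ^ p ∈ w.B 1
  ne_zero : π ≠ 0
  unif : w.v π = 1
  char : (p : K) ∈ w.B 1

lemma one_notMem_B : (1 : K) ∉ w.B 1 := fun h => by
  have := w.le_v one_ne_zero h
  rw [w.v_one] at this
  omega

lemma v_eq_zero_of_coprime {p d : ℕ} (hp : (p : K) ∈ w.B 1) (h : d.Coprime p) :
    (d : K) ≠ 0 ∧ w.v (d : K) = 0 := by
  have hd : (d : K) ∉ w.B 1 := by
    intro hd
    have e : (1 : K) = d * (d.gcdA p : ℤ) + p * (d.gcdB p : ℤ) := by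
      have := d.gcd_eq_gcd_ab p
      rw [h.gcd_eq_one] at this
      have := congrArg (fun z : ℤ => (z : K)) this
      simpa using this
    have hz : ∀ z : ℤ, (z : K) ∈ w.B 0 := by
      intro z
      obtain ⟨n, rfl | rfl⟩ := z.eq_nat_or_neg
      · simpa using w.natCast_mem_B n
      · simpa using w.natCast_mem_B n
    apply one_notMem_B (w := w)
    rw [e]
    exact add_mem (w.B_mul' hd (hz _) (by simp)) (w.B_mul' hp (hz _) (by simp))
  have h0 : (d : K) ≠ 0 := fun h => hd (by rw [h]; exact zero_mem _)
  refine ⟨h0, le_antisymm ?_ (w.le_v h0 (w.natCast_mem_B d))⟩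
  by_contra! hlt
  exact hd (w.B_of_le (by omega))

lemma Gain.pow {ρ : RingAut K} {n : ℤ} (hn : 0 ≤ n) (h : w.Gain ρ n) (j : ℕ) :
    w.Gain (ρ ^ j) n := by
  induction j with
  | zero => intro m x _; simp
  | succ j ih =>
    intro m x hx
    rw [pow_succ', RingAut.mul_apply]
    have e : ρ ((ρ ^ j) x) - x = (ρ ((ρ ^ j) x) - (ρ ^ j) x) + ((ρ ^ j) x - x) := by ring
    rw [e]
    have h1 := ih m x hx
    refine add_mem (h m _ ?_) h1
    have : (ρ ^ j) x = ((ρ ^ j) x - x) + x := by ring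
    rw [this]
    exact add_mem (w.B_mono (by linarith) h1) hx

lemma mem_of_pow_mem {u : K} (hu : u ∈ w.B 0) {k : ℕ} (h : u ^ k ∈ w.B 1) :
    u ∈ w.B 1 := by
  let u' : w.O := ⟨u, hu⟩
  have : u' ^ k ∈ w.m := h
  exact (inferInstance : w.m.IsPrime).mem_of_pow_mem _ this

/-- A wild automorphism of order prime to the residue characteristic is trivial. -/
lemma eq_one_of_gain {p d : ℕ} (hp : (p : K) ∈ w.B 1) (hd : d.Coprime p) {ρ : RingAut K}
    (hρ : ρ ^ d = 1) (h : w.Gain ρ 1) : ρ = 1 := by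
  obtain ⟨hd0, hd1⟩ := v_eq_zero_of_coprime hp hd
  ext y
  rw [RingAut.one_apply]
  by_contra hy
  set x := ρ y - y with hx
  have hx0 : x ≠ 0 := sub_ne_zero.2 hy
  have hsum : ∑ j ∈ Finset.range d, (ρ ^ j) x = 0 := by
    have e : ∀ j, (ρ ^ j) x = (ρ ^ (j + 1)) y - (ρ ^ j) y := by
      intro j; rw [hx, map_sub, pow_succ, RingAut.mul_apply]
    simp_rw [e]
    rw [Finset.sum_range_sub (fun j => (ρ ^ j) y), hρ]
    simp
  have h2 : (d : K) * x ∈ w.B (w.v x + 1) := by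
    have e : (d : K) * x = - ∑ j ∈ Finset.range d, ((ρ ^ j) x - x) := by
      rw [Finset.sum_sub_distrib, hsum]; simp
    rw [e]
    exact neg_mem (sum_mem fun j _ => h.pow zero_le_one j _ _ (w.B_of_le le_rfl))
  have := w.le_v (mul_ne_zero hd0 hx0) h2
  rw [w.v_mul _ _ hd0 hx0, hd1] at this
  omega

namespace Loc

variable {I : Subgroup (RingAut K)} {φ : RingAut K} {p : ℕ} {π : K}

lemma v_ratio (L : w.Loc I φ p π) {σ : RingAut K} (hσ : w.Inv σ) :
    σ π / π ≠ 0 ∧ w.v (σ π / π) = 0 := by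
  have h0 : σ π ≠ 0 := by simpa using L.ne_zero
  exact ⟨div_ne_zero h0 L.ne_zero, by rw [w.v_div h0 L.ne_zero, hσ, sub_self]⟩

/-- The tame character takes values in the `(p-1)`-st roots of unity when a Frobenius commutes
with inertia. -/
lemma ratio_pow (L : w.Loc I φ p π) {σ : RingAut K} (hσ : σ ∈ I) :
    (σ π / π) ^ (p - 1) - 1 ∈ w.B 1 := by
  obtain ⟨u0, u1⟩ := L.v_ratio (L.inv σ hσ)
  obtain ⟨c0, c1⟩ := L.v_ratio L.inv_frob
  set u := σ π / π with hu
  set c := φ π / π with hc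
  have hπ0 := L.ne_zero
  have eφ : φ π = c * π := by rw [hc]; field_simp
  have e1 : φ u = σ c / c * u := by
    rw [hu, map_div₀, L.comm σ hσ, eφ, map_mul]; field_simp
  have h1 : u ^ p - u ∈ w.B 1 := by
    have e : u ^ p - u = (σ c - c) * (c⁻¹ * u) - (φ u - u ^ p) := by
      rw [e1]; field_simp; ring
    rw [e]
    refine sub_mem (w.B_mul' (L.inertia σ hσ c (w.B_of_le c1.ge)) (w.B_of_le (n := 0) ?_)
      (by simp)) (L.frob u (w.B_of_le u1.ge))
    rw [w.v_mul _ _ (inv_ne_zero c0) u0, w.v_inv c0, c1, u1]; simp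
  have e : u ^ (p - 1) - 1 = (u ^ p - u) * u⁻¹ := by
    have : u ^ p = u ^ (p - 1) * u := by rw [← pow_succ, Nat.sub_add_cancel L.hp.one_le]
    rw [this]; field_simp
  rw [e]
  exact w.B_mul' h1 (w.B_of_le (n := 0) (by rw [w.v_inv u0, u1]; simp)) (by simp)

/-- The order of a tame inertia group commuting with a Frobenius is at most `p - 1`. -/
lemma card_le (L : w.Loc I φ p π) [Finite I] (hc : (Nat.card I).Coprime p) :
    Nat.card I ≤ p - 1 := by
  by_contra! hlt
  have := Fintype.ofFinite I
  rw [Nat.card_eq_fintype_card] at hlt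
  have hp2 := L.hp.two_le
  let f : I → w.O := fun σ => ⟨(σ : RingAut K) π / π,
    w.B_of_le (L.v_ratio (L.inv σ σ.2)).2.ge⟩
  obtain ⟨σ, τ, hne, hB⟩ := w.exists_congr f (Polynomial.X ^ (p - 1) - Polynomial.C 1)
    (Polynomial.X_pow_sub_C_ne_zero (by omega) _)
    (by
      intro σ
      rw [Polynomial.eval_sub, Polynomial.eval_pow, Polynomial.eval_X, Polynomial.eval_C,
        ← map_pow, ← map_one (Ideal.Quotient.mk w.m), ← map_sub, Ideal.Quotient.eq_zero_iff_mem]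
      exact L.ratio_pow σ.2)
    (by rwa [Polynomial.natDegree_X_pow_sub_C])
  apply hne
  have h2 : (σ : RingAut K) π - (τ : RingAut K) π ∈ w.B 2 := by
    have e : (σ : RingAut K) π - (τ : RingAut K) π =
      ((f σ : K) - f τ) * π := by simp only [f]; have := L.ne_zero; field_simp
    rw [e]
    exact w.B_mul' hB (w.B_of_le L.unif.ge) (by norm_num)
  set ρ : I := τ⁻¹ * σ with hρ
  have hg : w.Gain (ρ : RingAut K) 1 := by
    refine (L.inv ρ ρ.2).gain L.ne_zero L.unif ?_ fun u hu _ =>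
      L.inertia _ ρ.2 _ (w.B_of_le hu.ge)
    have e : (ρ : RingAut K) π - π = (τ : RingAut K)⁻¹ ((σ : RingAut K) π - (τ : RingAut K) π) := by
      rw [map_sub, ← RingAut.mul_apply, ← RingAut.mul_apply, inv_mul_cancel]; simp [hρ]
    rw [e]
    exact (L.inv τ τ.2).inv.map_B h2
  have h1 : (ρ : RingAut K) = 1 := eq_one_of_gain L.char hc (by
    rw [← Subgroup.coe_pow, pow_card_eq_one', Subgroup.coe_one]) hg
  have : ρ = 1 := Subtype.ext h1
  rw [hρ, inv_mul_eq_one] at this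
  exact this.symm

end Loc

end DVal

/-! ### Wild inertia -/

namespace DVal

variable {K : Type*} [Field K] {w : DVal K}

lemma map_norm_eq {σ : RingAut K} {n : ℕ} (h : σ ^ n = 1) (x : K) :
    σ (∏ j ∈ Finset.range n, (σ ^ j) x) = ∏ j ∈ Finset.range n, (σ ^ j) x := by
  by_cases hx : x = 0
  · subst hx
    rcases Nat.eq_zero_or_pos n with rfl | hn
    · simp
    · have : ∏ j ∈ Finset.range n, (σ ^ j) (0 : K) = 0 :=
        Finset.prod_eq_zero (Finset.mem_range.2 hn) (by simp)
      rw [this, map_zero]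
  have e : σ (∏ j ∈ Finset.range n, (σ ^ j) x) * x = (∏ j ∈ Finset.range n, (σ ^ j) x) * x := by
    have e1 : ∏ j ∈ Finset.range (n + 1), (σ ^ j) x =
        σ (∏ j ∈ Finset.range n, (σ ^ j) x) * x := by
      rw [Finset.prod_range_succ', map_prod]
      simp [pow_succ', RingAut.mul_apply]
    rw [← e1, Finset.prod_range_succ, h, RingAut.one_apply]
  exact mul_right_cancel₀ hx e

lemma map_trace_eq {σ : RingAut K} {n : ℕ} (h : σ ^ n = 1) (x : K) :
    σ (∑ j ∈ Finset.range n, (σ ^ j) x) = ∑ j ∈ Finset.range n, (σ ^ j) x := by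
  have e : σ (∑ j ∈ Finset.range n, (σ ^ j) x) + x = (∑ j ∈ Finset.range n, (σ ^ j) x) + x := by
    have e1 : ∑ j ∈ Finset.range (n + 1), (σ ^ j) x =
        σ (∑ j ∈ Finset.range n, (σ ^ j) x) + x := by
      rw [Finset.sum_range_succ', map_sum]
      simp [pow_succ', RingAut.mul_apply]
    rw [← e1, Finset.sum_range_succ, h, RingAut.one_apply]
  exact add_right_cancel e

/-- The cocycle identity for `σ ↦ σ π / π`. -/
lemma prod_ratio {σ : RingAut K} {π : K} (h0 : π ≠ 0) (n : ℕ) :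
    (∏ j ∈ Finset.range n, (σ ^ j) (σ π / π)) * π = (σ ^ n) π := by
  induction n with
  | zero => simp
  | succ n ih =>
    have h1 : (σ ^ n) π ≠ 0 := (map_ne_zero (σ ^ n)).2 h0
    rw [Finset.prod_range_succ, mul_right_comm, ih, map_div₀, pow_succ, RingAut.mul_apply]
    field_simp

namespace Loc

variable {I : Subgroup (RingAut K)} {φ : RingAut K} {p : ℕ} {π : K}

/-- An inertial automorphism of order `p` acts trivially on the maximal ideal modulo its square. -/
lemma sub_mem_B_two (L : w.Loc I φ p π) {σ : RingAut K} (hσ : σ ∈ I) (h : σ ^ p = 1) :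
    σ π - π ∈ w.B 2 := by
  obtain ⟨u0, u1⟩ := L.v_ratio (L.inv σ hσ)
  have hπ0 := L.ne_zero
  have hprod := prod_ratio (σ := σ) hπ0 p
  set u := σ π / π with hu
  have huB : u ∈ w.B 0 := w.B_of_le u1.ge
  rw [h, RingAut.one_apply, mul_eq_right₀ hπ0] at hprod
  have hn : ∀ n : ℕ, ∏ j ∈ Finset.range n, (σ ^ j) u - u ^ n ∈ w.B 1 := by
    intro n
    induction n with
    | zero => simp
    | succ n ih =>
      have e : ∏ j ∈ Finset.range (n + 1), (σ ^ j) u - u ^ (n + 1) =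
          (∏ j ∈ Finset.range n, (σ ^ j) u - u ^ n) * (σ ^ n) u + u ^ n * ((σ ^ n) u - u) := by
        rw [Finset.prod_range_succ]; ring
      rw [e]
      refine add_mem (w.B_mul' ih (((L.inv σ hσ).pow n).map_B huB) (by simp))
        (w.B_mul' (w.B_pow huB n) (L.inertia _ (I.pow_mem hσ n) u huB) (by simp))
  have h1 := hn p
  rw [hprod] at h1
  let c : w.O := ⟨u - 1, sub_mem huB w.one_mem_B⟩
  obtain ⟨r, hr⟩ := exists_add_pow_prime_eq L.hp 1 c
  have hr' : (u : K) ^ p = 1 + (u - 1) ^ p + p * (u - 1) * r := by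
    have := congrArg (fun z : w.O => (z : K)) hr
    simpa [c] using this
  have h2 : u - 1 ∈ w.B 1 := by
    refine mem_of_pow_mem c.2 (k := p) ?_
    have e : (u - 1) ^ p = -(1 - u ^ p) - p * ((u - 1) * r) := by rw [hr']; ring
    show (u - 1) ^ p ∈ w.B 1
    rw [e]
    exact sub_mem (neg_mem h1) (w.B_mul' L.char (w.B_mul c.2 r.2) (by simp))
  have e : σ π - π = (u - 1) * π := by rw [hu]; field_simp
  rw [e]
  exact w.B_mul' h2 (w.B_of_le L.unif.ge) (by norm_num)

lemma gain_one (L : w.Loc I φ p π) {σ : RingAut K} (hσ : σ ∈ I) (h : σ ^ p = 1) :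
    w.Gain σ 1 :=
  (L.inv σ hσ).gain L.ne_zero L.unif (L.sub_mem_B_two hσ h) fun _ hu _ =>
    L.inertia _ hσ _ (w.B_of_le hu.ge)

/-- The class of `(σ π - π) / π ^ 2` is a root of `c X ^ p - X`, where `c` is the class of `φ π / π`.
So among `p ^ 2` inertial automorphisms of order dividing `p` two have the same class, and their
quotient lies deeper in the ramification filtration. -/
lemma exists_deep (L : w.Loc I φ p π) [Finite I] (hcard : Nat.card I = p ^ 2)
    (hexp : ∀ σ ∈ I, σ ^ p = 1) {f : ℕ} (hf : f ≠ 0)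
    (hq : ∀ x ∈ w.B 0, x ^ p ^ f - x ∈ w.B 1) :
    ∃ σ ∈ I, σ ≠ 1 ∧ σ π - π ∈ w.B 3 := by
  have := Fintype.ofFinite I
  rw [Nat.card_eq_fintype_card] at hcard
  have hp2 := L.hp.two_le
  have hπ0 := L.ne_zero
  have hqB : ((p ^ f : ℕ) : K) ∈ w.B 1 := by
    obtain ⟨g, rfl⟩ := Nat.exists_eq_succ_of_ne_zero hf
    push_cast
    rw [pow_succ]
    refine w.B_mul' (w.B_pow (w.natCast_mem_B p) g) L.char (by simp)
  have hunit : ∀ σ ∈ I, ∀ a ∈ w.B 0, σ a - a ∈ w.B 2 := by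
    intro σ hσ a ha
    have := unit_gain (w := w) (s := 1) zero_le_one hqB ha (L.inertia σ hσ a ha)
      (by have := L.gain_one hσ (hexp σ hσ) 1 _ (hq a ha); simpa using this)
    simpa using this
  let f : I → w.O := fun σ => ⟨((σ : RingAut K) π - π) * (π⁻¹) ^ 2,
    w.B_mul' (L.sub_mem_B_two σ.2 (hexp _ σ.2)) (w.B_of_le le_rfl) (by
      rw [inv_pow, w.v_inv (pow_ne_zero _ hπ0)]
      have := w.v_zpow hπ0 2
      rw [L.unif] at this
      have h' : w.v (π ^ 2) = 2 := by exact_mod_cast this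
      rw [h']; norm_num)⟩
  obtain ⟨c0, c1⟩ := L.v_ratio L.inv_frob
  set c := φ π / π with hc
  have eφ : φ π = c * π := by rw [hc]; field_simp
  have hcB : c ∈ w.B 0 := w.B_of_le c1.ge
  have hciB : c⁻¹ ∈ w.B 0 := w.B_of_le (by rw [w.v_inv c0, c1]; simp)
  let c' : w.O := ⟨c, hcB⟩
  have hc' : Ideal.Quotient.mk w.m c' ≠ 0 := by
    rw [Ne, Ideal.Quotient.eq_zero_iff_mem]
    intro h
    have := w.le_v c0 h
    omega
  let g : Polynomial (w.O ⧸ w.m) :=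
    Polynomial.C (Ideal.Quotient.mk w.m c') * Polynomial.X ^ p - Polynomial.X
  have hgd : g.natDegree ≤ p := by
    refine (Polynomial.natDegree_sub_le _ _).trans (max_le (Polynomial.natDegree_C_mul_X_pow_le _ _)
      ?_)
    exact Polynomial.natDegree_X_le.trans (by omega)
  have hg0 : g ≠ 0 := by
    intro h
    have := congrArg (fun r => r.coeff p) h
    simp only [g, Polynomial.coeff_sub, Polynomial.coeff_C_mul, Polynomial.coeff_X_pow,
      Polynomial.coeff_X, Polynomial.coeff_zero] at this
    rw [if_pos trivial, if_neg (by omega)] at this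
    exact hc' (by simpa using this)
  obtain ⟨σ, τ, hne, hB⟩ := w.exists_congr f g hg0
    (by
      intro σ
      simp only [g, Polynomial.eval_sub, Polynomial.eval_mul, Polynomial.eval_pow,
        Polynomial.eval_X, Polynomial.eval_C]
      rw [← map_pow, ← map_mul, ← map_sub, Ideal.Quotient.eq_zero_iff_mem]
      set a : K := (f σ : K) with ha
      have haB : a ∈ w.B 0 := (f σ).2
      show c * a ^ p - a ∈ w.B 1
      have hs := hunit σ σ.2 c hcB
      have e1 : φ a = ((σ : RingAut K) c * a + ((σ : RingAut K) c - c) * π⁻¹) * (c⁻¹) ^ 2 := by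
        simp only [ha, f]
        rw [map_mul, map_sub, map_pow, map_inv₀, L.comm σ σ.2, eφ, map_mul]
        field_simp; ring
      have e2 : c * a ^ p - a = ((σ : RingAut K) c - c) * (a * c⁻¹)
          + (((σ : RingAut K) c - c) * π⁻¹) * c⁻¹ - c * (φ a - a ^ p) := by
        rw [e1]; field_simp; ring
      rw [e2]
      have hπi : π⁻¹ ∈ w.B (-1) := w.B_of_le (by rw [w.v_inv hπ0, L.unif])
      refine sub_mem (add_mem (w.B_mul' hs (w.B_mul haB hciB) (by norm_num))
        (w.B_mul' (w.B_mul hs hπi) hciB (by norm_num))) (w.B_mul' hcB (L.frob a haB) (by simp)))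
    (by rw [hcard]; nlinarith)
  have h2 : (σ : RingAut K) π - (τ : RingAut K) π ∈ w.B 3 := by
    have e : (σ : RingAut K) π - (τ : RingAut K) π =
      ((f σ : K) - f τ) * (π * π) := by simp only [f]; field_simp; ring
    rw [e]
    exact w.B_mul' hB (w.B_mul (w.B_of_le L.unif.ge) (w.B_of_le L.unif.ge)) (by norm_num)
  refine ⟨(τ⁻¹ * σ : I), (τ⁻¹ * σ : I).2, ?_, ?_⟩
  · intro h
    have : τ⁻¹ * σ = 1 := Subtype.ext h
    rw [inv_mul_eq_one] at this
    exact hne this.symm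
  · have e : ((τ⁻¹ * σ : I) : RingAut K) π - π =
        (τ : RingAut K)⁻¹ ((σ : RingAut K) π - (τ : RingAut K) π) := by
      rw [map_sub, ← RingAut.mul_apply, ← RingAut.mul_apply, inv_mul_cancel]; simp
    rw [e]
    exact (L.inv τ τ.2).inv.map_B h2

end Loc

end DVal

namespace DVal

variable {K : Type*} [Field K] {w : DVal K}

namespace Loc

variable {I : Subgroup (RingAut K)} {φ : RingAut K} {p : ℕ} {π : K}

/-- A group of order `p ^ 2` is generated by an element `σ` of order `p` and any `τ` outside `⟨σ⟩`. -/
lemma fixed_of_fixed (hp : p.Prime) [Finite I] (hcard : Nat.card I = p ^ 2)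
    {σ τ : RingAut K} (hσ : σ ∈ I) (hσ1 : σ ≠ 1) (hσp : σ ^ p = 1) (hτ : τ ∈ I)
    (hτσ : τ ∉ Subgroup.zpowers σ) {x : K} (hx : σ x = x) (hy : τ x = x) :
    ∀ ρ ∈ I, ρ x = x := by
  let S : Subgroup (RingAut K) := MulAction.stabilizer (RingAut K) x ⊓ I
  have hSI : S ≤ I := inf_le_right
  have hmem : ∀ ρ, ρ ∈ S ↔ ρ x = x ∧ ρ ∈ I := fun ρ => Iff.rfl
  have hσS : σ ∈ S := (hmem _).2 ⟨hx, hσ⟩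
  have hτS : τ ∈ S := (hmem _).2 ⟨hy, hτ⟩
  have hfin : Finite S := Finite.of_injective _ (Subgroup.inclusion_injective hSI)
  have hz : Subgroup.zpowers σ ≤ S := by rwa [Subgroup.zpowers_le]
  have hzc : Nat.card (Subgroup.zpowers σ) = p := by
    rw [Nat.card_zpowers, orderOf_eq_prime_iff (hp := ⟨hp⟩)]
    exact ⟨hσp, hσ1⟩
  have hd : Nat.card S ∣ p ^ 2 := hcard ▸ Subgroup.card_dvd_of_le hSI
  obtain ⟨k, hk, hk'⟩ := (Nat.dvd_prime_pow hp).1 hd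
  have hSeq : S = I := by
    refine Subgroup.eq_of_le_of_card_ge hSI ?_
    rw [hcard, hk']
    by_contra! hlt
    have hk1 : k ≤ 1 := by
      by_contra! h
      have : k = 2 := by omega
      rw [this] at hlt; exact lt_irrefl _ hlt
    have hle : Nat.card S ≤ Nat.card (Subgroup.zpowers σ) := by
      rw [hzc, hk']
      calc p ^ k ≤ p ^ 1 := Nat.pow_le_pow_right hp.pos hk1
        _ = p := pow_one p
    have := Subgroup.eq_of_le_of_card_ge hz hle
    exact hτσ (this ▸ hτS)
  intro ρ hρ
  rw [← hSeq] at hρ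
  exact ((hmem _).1 hρ).1

lemma pow_comm_apply {σ τ : RingAut K} (h : τ * σ = σ * τ) (j : ℕ) (x : K) :
    (τ ^ j) (σ x) = σ ((τ ^ j) x) := by
  have := (show Commute τ σ from h).pow_left j
  rw [← RingAut.mul_apply, ← RingAut.mul_apply, this.eq]

/-- For odd `p`, a totally ramified inertia group commuting with a Frobenius, over a base in which `p`
is a uniformizer, cannot be elementary abelian of order `p ^ 2`. The base enters through `hvp` and
`hfix`: the elements fixed by `I` have valuations divisible by `p ^ 2`, the valuation of `p`. -/
theorem wild (L : w.Loc I φ p π) (hodd : 3 ≤ p) [Finite I] (hcard : Nat.card I = p ^ 2)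
    (hexp : ∀ σ ∈ I, σ ^ p = 1) (hcomm : ∀ σ ∈ I, ∀ τ ∈ I, σ * τ = τ * σ)
    (hp0 : (p : K) ≠ 0) (hvp : w.v (p : K) = p ^ 2)
    (hfix : ∀ x, x ≠ 0 → (∀ σ ∈ I, σ x = x) → (p : ℤ) ^ 2 ∣ w.v x)
    {f : ℕ} (hf : f ≠ 0) (hq : ∀ x ∈ w.B 0, x ^ p ^ f - x ∈ w.B 1) : False := by
  obtain ⟨σ, hσ, hσ1, hσ3⟩ := L.exists_deep hcard hexp hf hq
  have hp := L.hp
  have hπ0 := L.ne_zero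
  have hp3 : (3 : ℤ) ≤ p := by exact_mod_cast hodd
  have hσp := hexp σ hσ
  obtain ⟨τ, hτ, hτσ⟩ : ∃ τ ∈ I, τ ∉ Subgroup.zpowers σ := by
    by_contra! h
    have h1 : Nat.card I ≤ Nat.card (Subgroup.zpowers σ) := by
      have : Finite (Subgroup.zpowers σ) := by
        have : Subgroup.zpowers σ ≤ I := by rwa [Subgroup.zpowers_le]
        exact Finite.of_injective _ (Subgroup.inclusion_injective this)
      exact Nat.card_le_card_of_injective _ (Subgroup.inclusion_injective
        (show I ≤ Subgroup.zpowers σ from h))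
    rw [Nat.card_zpowers, hcard] at h1
    have := Nat.le_of_dvd hp.pos (orderOf_dvd_of_pow_eq_one hσp)
    nlinarith
  have hτp := hexp τ hτ
  have hστ : ∀ x, σ (τ x) = τ (σ x) := fun x => by
    rw [← RingAut.mul_apply, hcomm σ hσ τ hτ, RingAut.mul_apply]
  have hτσc := hcomm τ hτ σ hσ
  have hfixed : ∀ {x : K}, σ x = x → τ x = x → ∀ ρ ∈ I, ρ x = x := fun hx hy =>
    fixed_of_fixed hp hcard hσ hσ1 hσp hτ hτσ hx hy
  have hvpow : ∀ {ρ : RingAut K}, ρ ∈ I → ∀ {x : K}, x ≠ 0 →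
      ∏ j ∈ Finset.range p, (ρ ^ j) x ≠ 0 ∧
      w.v (∏ j ∈ Finset.range p, (ρ ^ j) x) = p * w.v x := by
    intro ρ hρ x hx
    have hne : ∀ j ∈ Finset.range p, (ρ ^ j) x ≠ 0 := fun j _ => (map_ne_zero (ρ ^ j)).2 hx
    refine ⟨Finset.prod_ne_zero_iff.2 hne, ?_⟩
    rw [w.v_prod _ _ hne, Finset.sum_congr rfl fun j _ => (L.inv ρ hρ).pow j x]
    simp
  -- the value group of the fixed field of `τ`
  have hdvd : ∀ x, x ≠ 0 → τ x = x → (p : ℤ) ∣ w.v x := by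
    intro x hx hτx
    obtain ⟨hn0, hn⟩ := hvpow hσ hx
    have h1 := hfix _ hn0 (hfixed (map_norm_eq hσp x) (by
      rw [map_prod]
      refine Finset.prod_congr rfl fun j _ => ?_
      rw [← pow_comm_apply hτσc.symm j x, hτx]))
    rw [hn, sq] at h1
    exact Int.dvd_of_mul_dvd_mul_left (by omega) h1
  -- on that field, membership in `B (p * k + 1)` improves to `B (p * (k + 1))`
  have hjump : ∀ (k : ℤ) (x : K), τ x = x → x ∈ w.B (p * k + 1) → x ∈ w.B (p * (k + 1)) := by
    intro k x hx hB
    by_cases hx0 : x = 0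
    · exact Or.inl hx0
    obtain ⟨c, hc⟩ := hdvd x hx0 hx
    have := w.le_v hx0 hB
    refine w.B_of_le ?_
    rw [hc] at this ⊢
    have : k < c := by
      by_contra! h
      nlinarith
    nlinarith
  -- a uniformizer of the fixed field of `τ`
  set ϖ := ∏ j ∈ Finset.range p, (τ ^ j) π with hϖ
  obtain ⟨hϖ0, hϖv⟩ : ϖ ≠ 0 ∧ w.v ϖ = p * w.v π := hvpow hτ hπ0
  rw [L.unif, mul_one] at hϖv
  have hτϖ : τ ϖ = ϖ := map_norm_eq hτp π
  have hσϖ : σ ϖ - ϖ ∈ w.B (w.v ϖ + 2 * p) := by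
    obtain ⟨u0, u1⟩ := L.v_ratio (L.inv σ hσ)
    have hu : σ π / π - 1 ∈ w.B 2 := by
      have e : σ π / π - 1 = (σ π - π) * π⁻¹ := by field_simp
      rw [e]
      exact w.B_mul' hσ3 (w.B_of_le le_rfl) (by rw [w.v_inv hπ0, L.unif]; norm_num)
    have hN := norm_mem hp (w.B_of_le (by rw [hvp])) (L.inv τ hτ) (L.gain_one hτ hτp) u1 u0 hu
    have e : ∏ j ∈ Finset.range p, (τ ^ j) (σ π / π) = σ ϖ / ϖ := by
      rw [hϖ, map_prod, ← Finset.prod_div_distrib]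
      refine Finset.prod_congr rfl fun j _ => ?_
      rw [map_div₀, pow_comm_apply hτσc]
    rw [e] at hN
    have h2 := hjump 1 (σ ϖ / ϖ - 1) (by rw [map_sub, map_div₀, ← hστ, hτϖ, map_one])
      (by rwa [mul_one])
    have e' : σ ϖ - ϖ = ϖ * (σ ϖ / ϖ - 1) := by field_simp
    rw [e']
    exact w.B_mul' (w.B_of_le le_rfl) h2 (by linarith)
  have hqB : ((p ^ f : ℕ) : K) ∈ w.B p := by
    obtain ⟨g, rfl⟩ := Nat.exists_eq_succ_of_ne_zero hf
    push_cast
    rw [pow_succ]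
    refine w.B_mul' (w.B_pow (w.natCast_mem_B p) g) (w.B_of_le hvp.ge) ?_
    nlinarith
  -- `σ` acts on the fixed field of `τ` with ramification jump at least two
  have hgain : ∀ (m : ℤ) (x : K), τ x = x → x ∈ w.B m → σ x - x ∈ w.B (m + 2 * p) := by
    intro m x hx hxm
    by_cases hx0 : x = 0
    · simp [hx0]
    obtain ⟨k, hk⟩ := hdvd x hx0 hx
    have hz0 : ϖ ^ k ≠ 0 := zpow_ne_zero _ hϖ0
    have hzv : w.v (ϖ ^ k) = w.v x := by rw [w.v_zpow hϖ0, hϖv, hk, mul_comm]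
    set a := x / ϖ ^ k with ha
    have ha0 : a ≠ 0 := div_ne_zero hx0 hz0
    have hav : w.v a = 0 := by rw [ha, w.v_div hx0 hz0, hzv, sub_self]
    have haB : a ∈ w.B 0 := w.B_of_le hav.ge
    have hτa : τ a = a := by rw [ha, map_div₀, map_zpow₀, hτϖ, hx]
    have hτb : τ (a ^ p ^ f - a) = a ^ p ^ f - a := by rw [map_sub, map_pow, hτa]
    have hb1 : a ^ p ^ f - a ∈ w.B p := by
      have := hjump 0 _ hτb (by simpa using hq a haB)
      simpa using this
    have hga : σ a - a ∈ w.B (w.v a + 2 * p) := by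
      rw [hav, zero_add]
      refine unit_gain (by omega) hqB haB ?_ ?_
      · have := hjump 0 (σ a - a) (by rw [map_sub, ← hστ, hτa])
          (by simpa using L.inertia σ hσ a haB)
        simpa using this
      · have h1 := L.gain_one hσ hσp _ _ hb1
        have := hjump 1 (σ (a ^ p ^ f - a) - (a ^ p ^ f - a))
          (by rw [map_sub τ, ← hστ, hτb]) (by rwa [mul_one])
        exact w.B_mono (by linarith) this
    have e : ϖ ^ k * a = x := by rw [ha]; field_simp
    have := (L.inv σ hσ).good_mul hz0 ha0 ((L.inv σ hσ).good_zpow hϖ0 hσϖ k) hga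
    rw [e] at this
    exact w.B_mono (by linarith [w.le_v hx0 hxm]) this
  let T : AddMonoid.End K := (σ : K →+ K)
  have hT : ∀ (j : ℕ) (x : K), (T ^ j) x = (σ ^ j) x := by
    intro j
    induction j with
    | zero => intro x; rfl
    | succ j ih =>
      intro x
      rw [pow_succ, pow_succ, end_mul_apply, ih, RingAut.mul_apply]
      rfl
  have hiter : ∀ k : ℕ, τ (((T - 1) ^ k) ϖ) = ((T - 1) ^ k) ϖ ∧
      ((T - 1) ^ k) ϖ ∈ w.B (p + 2 * p * k) := by
    intro k
    induction k with
    | zero => exact ⟨hτϖ, by simpa using w.B_of_le hϖv.ge⟩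
    | succ k ih =>
      rw [pow_succ', end_mul_apply]
      have e : ∀ y, (T - 1) y = σ y - y := fun y => rfl
      rw [e]
      refine ⟨by rw [map_sub, ← hστ, ih.1], ?_⟩
      exact w.B_mono (by push_cast; linarith) (hgain _ _ ih.1 ih.2)
  -- the trace of `ϖ` to the base is `p * ϖ` up to terms of higher valuation
  set Tr := ∑ j ∈ Finset.range p, (σ ^ j) ϖ with hTr
  have hτTr : τ Tr = Tr := by
    rw [hTr, map_sum]
    refine Finset.sum_congr rfl fun j _ => ?_
    rw [← pow_comm_apply hτσc.symm j, hτϖ]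
  have hpϖ : w.v ((p : K) * ϖ) = p ^ 2 + p := by rw [w.v_mul _ _ hp0 hϖ0, hvp, hϖv]
  obtain ⟨g, hg⟩ : ∃ g, p = g + 1 := ⟨p - 1, by omega⟩
  have hTr2 : Tr = p * ϖ + ∑ k ∈ Finset.range g, p.choose (k + 2) • (((T - 1) ^ (k + 1)) ϖ) := by
    have h1 := sum_pow_eq T p ϖ
    rw [Finset.sum_congr rfl fun j _ => hT j ϖ, ← hTr] at h1
    rw [h1]
    conv_lhs => rw [hg, Finset.sum_range_succ', ← hg]
    rw [add_comm]
    simp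
  have hrest : ∑ k ∈ Finset.range g, p.choose (k + 2) • (((T - 1) ^ (k + 1)) ϖ) ∈
      w.B (w.v ((p : K) * ϖ) + 1) := by
    rw [hpϖ]
    refine sum_mem fun k hk => ?_
    rw [Finset.mem_range] at hk
    have hi := (hiter (k + 1)).2
    rw [nsmul_eq_mul]
    by_cases hk1 : k + 2 = p
    · rw [hk1, Nat.choose_self, Nat.cast_one, one_mul]
      refine w.B_mono ?_ hi
      have : (k : ℤ) = p - 2 := by omega
      push_cast
      rw [this]
      nlinarith
    · obtain ⟨c, hc⟩ := hp.dvd_choose_self (k := k + 2) (by omega) (by omega)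
      rw [hc]
      push_cast
      refine w.B_mul' (w.B_mul (w.B_of_le hvp.ge) (w.natCast_mem_B c)) hi ?_
      push_cast
      nlinarith [mul_nonneg (show (0 : ℤ) ≤ p by omega) (show (0 : ℤ) ≤ k by omega)]
  obtain ⟨hTr0, hTrv⟩ := w.v_add_eq (mul_ne_zero hp0 hϖ0) hrest
  rw [← hTr2] at hTr0 hTrv
  have := hfix Tr hTr0 (hfixed (map_trace_eq hσp ϖ) hτTr)
  rw [hTrv, hpϖ] at this
  have h2 : (p : ℤ) ^ 2 ∣ p := (Int.dvd_add_right (dvd_refl _)).1 this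
  have := Int.le_of_dvd (by omega) h2
  nlinarith

end Loc

end DVal

/-! ### Ramification index and inertia group -/

namespace NFLoc

open NumberField IsDedekindDomain
open scoped Pointwise

lemma card_inertia_eq (K : Type*) {L : Type*} [Field K] [Field L] [NumberField K] [NumberField L] [Algebra K L]
    (G : Type*) [Group G] [Finite G] [MulSemiringAction G L] [IsGaloisGroup G K L]
    (P : Ideal (𝓞 L)) [P.IsPrime] (hP : P ≠ ⊥) :
    Nat.card (P.inertia G) = P.ramificationIdx (𝓞 K) := by
  have : (P.under (𝓞 K)).IsMaximal := by
    have : P.IsMaximal := Ideal.IsPrime.isMaximal ‹_› hP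
    infer_instance
  have : Finite (𝓞 K ⧸ P.under (𝓞 K)) := by
    apply Ideal.finiteQuotientOfFreeOfNeBot
    exact Ideal.under_ne_bot _ hP
  have : Finite (P.under (𝓞 K)).ResidueField := by
    have := Ideal.bijective_algebraMap_quotient_residueField (P.under (𝓞 K))
    exact Finite.of_surjective _ this.2
  have : PerfectField (P.under (𝓞 K)).ResidueField := inferInstance
  rw [Ideal.card_inertia_eq_ramificationIdxIn (P.under (𝓞 K)) P,
    Ideal.ramificationIdxIn_eq_ramificationIdx (P.under (𝓞 K)) P G]

/-- A Galois group acting trivially on residues is totally ramified. -/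
lemma card_eq_of_forall (K : Type*) {L : Type*} [Field K] [Field L] [NumberField K] [NumberField L] [Algebra K L]
    (G : Type*) [Group G] [Finite G] [MulSemiringAction G L] [IsGaloisGroup G K L]
    (P : Ideal (𝓞 L)) [P.IsPrime] (hP : P ≠ ⊥)
    (h : ∀ (g : G) (a : 𝓞 L), ∃ b ∈ P, (b : L) = g • (a : L) - a) :
    Nat.card G = P.ramificationIdx (𝓞 K) := by
  rw [← card_inertia_eq K G P hP]
  have : P.inertia G = ⊤ := by
    rw [eq_top_iff]
    intro g _
    rw [AddSubgroup.mem_inertia]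
    intro a
    obtain ⟨b, hb, e⟩ := h g a
    have : g • a - a = b := by
      apply RingOfIntegers.coe_injective
      exact e.symm
    rw [this]; exact hb
  rw [this, Subgroup.card_top]

lemma card_inertia_int_eq {L : Type*} [Field L] [NumberField L]
    (G : Type*) [Group G] [Finite G] [MulSemiringAction G L] [IsGaloisGroup G ℚ L]
    (P : Ideal (𝓞 L)) [P.IsPrime] (hP : P ≠ ⊥) :
    Nat.card (P.inertia G) = P.ramificationIdx ℤ := by
  have : (P.under ℤ).IsMaximal := by
    have : P.IsMaximal := Ideal.IsPrime.isMaximal ‹_› hP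
    infer_instance
  have : Finite (ℤ ⧸ P.under ℤ) := by
    apply Ideal.finiteQuotientOfFreeOfNeBot
    exact Ideal.under_ne_bot _ hP
  have : Finite (P.under ℤ).ResidueField := by
    have := Ideal.bijective_algebraMap_quotient_residueField (P.under ℤ)
    exact Finite.of_surjective _ this.2
  have : PerfectField (P.under ℤ).ResidueField := inferInstance
  rw [Ideal.card_inertia_eq_ramificationIdxIn (P.under ℤ) P,
    Ideal.ramificationIdxIn_eq_ramificationIdx (P.under ℤ) P G]

variable {L : Type*} [Field L] [NumberField L]

/-- The additive valuation of a number field at a finite place. -/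
noncomputable def dval (v : HeightOneSpectrum (𝓞 L)) : DVal L where
  v x := -WithZero.log (v.valuation L x)
  v_mul x y hx hy := by
    rw [map_mul, WithZero.log_mul (by simpa using hx) (by simpa using hy)]; ring
  v_add x y hx hy hxy := by
    have := (v.valuation L).map_add x y
    rcases le_max_iff.1 this with h | h
    · have := (WithZero.log_le_log (by simpa using hxy) (by simpa using hx)).2 h
      exact (min_le_left _ _).trans (by linarith)
    · have := (WithZero.log_le_log (by simpa using hxy) (by simpa using hy)).2 h
      exact (min_le_right _ _).trans (by linarith)

variable (v : HeightOneSpectrum (𝓞 L))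

lemma dval_v (x : L) : (dval v).v x = -WithZero.log (v.valuation L x) := rfl

lemma mem_B_iff (n : ℤ) (x : L) : x ∈ (dval v).B n ↔ v.valuation L x ≤ WithZero.exp (-n) := by
  rw [DVal.mem_B]
  by_cases hx : x = 0
  · simp [hx]
  · rw [← WithZero.log_le_iff_le_exp (by simpa using hx), dval_v]
    simp [hx]
    constructor <;> intro h <;> linarith

lemma mem_B_zero (x : L) : x ∈ (dval v).B 0 ↔ v.valuation L x ≤ 1 := by
  rw [mem_B_iff]; simp

lemma mem_B_one (x : L) : x ∈ (dval v).B 1 ↔ v.valuation L x < 1 := by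
  rw [mem_B_iff]
  by_cases hx : x = 0
  · simp [hx]
  · rw [← WithZero.log_le_iff_le_exp (by simpa using hx), ← WithZero.exp_zero, ← WithZero.log_lt_iff_lt_exp (by simpa using hx)]
    omega

lemma coe_mem_B_zero (a : 𝓞 L) : (a : L) ∈ (dval v).B 0 := by
  rw [mem_B_zero]; exact v.valuation_le_one a

lemma coe_mem_B_one (a : 𝓞 L) : (a : L) ∈ (dval v).B 1 ↔ a ∈ v.asIdeal := by
  rw [mem_B_one]; exact v.valuation_lt_one_iff_mem a

lemma v_eq_zero_iff {x : L} (hx : x ≠ 0) : (dval v).v x = 0 ↔ x ∈ (dval v).B 0 ∧ x ∉ (dval v).B 1 := by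
  simp only [DVal.mem_B, hx, false_or]; omega

lemma exists_frac {x : L} (hx : x ∈ (dval v).B 0) :
    ∃ a d : 𝓞 L, d ∉ v.asIdeal ∧ x * d = a := by
  obtain ⟨n, ⟨d, hd⟩, h⟩ := v.exists_primeCompl_mul_eq_of_integer x ((mem_B_zero v x).1 hx)
  exact ⟨n, d, hd, by simpa [mul_comm] using h⟩

lemma exists_unif : ∃ π : L, π ≠ 0 ∧ (dval v).v π = 1 := by
  obtain ⟨π, h⟩ := v.valuation_exists_uniformizer L
  refine ⟨π, ?_, ?_⟩
  · rintro rfl; rw [map_zero] at h; exact WithZero.exp_ne_zero h.symm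
  · rw [dval_v, h]; simp

/-- Two multiplicative maps that agree modulo `P` on integers agree modulo `P` on the local ring. -/
lemma congr_B (F G : L →*₀ L) (hG0 : ∀ a : 𝓞 L, G a ∈ (dval v).B 0)
    (hG1 : ∀ a : 𝓞 L, a ∉ v.asIdeal → G a ∉ (dval v).B 1)
    (h : ∀ a : 𝓞 L, F a - G a ∈ (dval v).B 1) {x : L} (hx : x ∈ (dval v).B 0) :
    F x - G x ∈ (dval v).B 1 := by
  obtain ⟨a, d, hd, e⟩ := exists_frac v hx
  have hGd := hG1 d hd
  have hFd : F d ∉ (dval v).B 1 := fun h' => hGd (by simpa using sub_mem h' (h d))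
  have hFd0 : F d ∈ (dval v).B 0 := by
    have := add_mem (DVal.B_mono _ zero_le_one (h d)) (hG0 d)
    simpa using this
  have hGne : G d ≠ 0 := fun h => hGd (by rw [h]; exact zero_mem _)
  have hFne : F d ≠ 0 := fun h => hFd (by rw [h]; exact zero_mem _)
  have e1 : F x = F a / F d := by rw [eq_div_iff hFne, ← map_mul, e]
  have e2 : G x = G a / G d := by rw [eq_div_iff hGne, ← map_mul, e]
  have vF := (v_eq_zero_iff v hFne).2 ⟨hFd0, hFd⟩
  have vG := (v_eq_zero_iff v hGne).2 ⟨hG0 d, hGd⟩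
  have key : F x - G x = (F d * G d)⁻¹ * ((F a - G a) * G d - G a * (F d - G d)) := by
    rw [e1, e2]; field_simp; ring
  rw [key]
  have h1 : (F d * G d)⁻¹ ∈ (dval v).B 0 := by
    rw [DVal.mem_B]; right
    rw [DVal.v_inv _ (mul_ne_zero hFne hGne), DVal.v_mul _ _ _ hFne hGne, vF, vG]; simp
  have h2 : (F a - G a) * G d - G a * (F d - G d) ∈ (dval v).B 1 := by
    apply sub_mem
    · simpa using DVal.B_mul _ (h a) (hG0 d)
    · simpa using DVal.B_mul _ (hG0 a) (h d)
  simpa using DVal.B_mul _ h1 h2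

/-- An automorphism preserving the valuation ring, along with its inverse, preserves the valuation. -/
lemma inv_of_map_B {σ : RingAut L} (h1 : ∀ x ∈ (dval v).B 0, σ x ∈ (dval v).B 0)
    (h2 : ∀ x ∈ (dval v).B 0, σ⁻¹ x ∈ (dval v).B 0) : (dval v).Inv σ := by
  have key : ∀ (τ : RingAut L) (h : ∀ x ∈ (dval v).B 0, τ x ∈ (dval v).B 0) (x : L) (hx : x ≠ 0),
      (dval v).v x = 0 → (dval v).v (τ x) = 0 := by
    intro τ h x hx h0
    have e1 : 0 ≤ (dval v).v (τ x) := by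
      have := h x (by rw [DVal.mem_B]; right; omega)
      rw [DVal.mem_B] at this; simpa [hx] using this
    have e2 : 0 ≤ (dval v).v (τ x⁻¹) := by
      have := h x⁻¹ (by rw [DVal.mem_B]; right; rw [DVal.v_inv _ hx]; omega)
      rw [DVal.mem_B] at this; simpa [hx] using this
    rw [map_inv₀, DVal.v_inv _ (by simpa using hx)] at e2
    omega
  obtain ⟨π, hπ0, hπ⟩ := exists_unif v
  have gen : ∀ (τ : RingAut L) (h : ∀ x ∈ (dval v).B 0, τ x ∈ (dval v).B 0) (x : L) (hx : x ≠ 0),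
      (dval v).v (τ x) = (dval v).v x * (dval v).v (τ π) := by
    intro τ h x hx
    set n := (dval v).v x with hn
    have hu : (dval v).v (x * π ^ (-n)) = 0 := by
      rw [DVal.v_mul _ _ _ hx (zpow_ne_zero _ hπ0), DVal.v_zpow _ hπ0, hπ, ← hn]; ring
    have := key τ h _ (mul_ne_zero hx (zpow_ne_zero _ hπ0)) hu
    rw [map_mul, map_zpow₀, DVal.v_mul _ _ _ (by simpa using hx) (zpow_ne_zero _ (by simpa using hπ0)),
      DVal.v_zpow _ (by simpa using hπ0)] at this
    linarith
  have hk : 0 ≤ (dval v).v (σ π) := by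
    have := h1 π (by rw [DVal.mem_B]; right; omega)
    rw [DVal.mem_B] at this; simpa [hπ0] using this
  have hmul := gen σ⁻¹ h2 (σ π) (by simpa using hπ0)
  have e : σ⁻¹ (σ π) = π := by rw [← RingAut.mul_apply]; simp
  rw [e, hπ] at hmul
  have h1' : (dval v).v (σ π) = 1 := by
    rcases Int.isUnit_iff.1 (IsUnit.of_mul_eq_one _ hmul.symm) with h | h
    · exact h
    · omega
  intro x
  by_cases hx : x = 0
  · simp [hx]
  · rw [gen σ h1 x hx, h1', mul_one]

end NFLoc

/-! ### Local data of a number field -/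

namespace NFLoc

open NumberField IsDedekindDomain
open scoped Pointwise

variable {L : Type*} [Field L] [NumberField L] (v : HeightOneSpectrum (𝓞 L))

lemma coe_smul' (σ : Gal(L/ℚ)) (a : 𝓞 L) : ((σ • a : 𝓞 L) : L) = σ a := rfl

lemma under_eq {p : ℕ} (hp : p.Prime) {P : Ideal (𝓞 L)} [P.IsPrime] (h : (p : 𝓞 L) ∈ P) :
    P.under ℤ = Ideal.span {(p : ℤ)} := by
  symm
  have hpi : Prime (p : ℤ) := Nat.prime_iff_prime_int.1 hp
  have : (Ideal.span {(p : ℤ)}).IsMaximal := by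
    apply Ideal.IsPrime.isMaximal
    · rwa [Ideal.span_singleton_prime hpi.ne_zero]
    · simpa using hp.ne_zero
  apply this.eq_of_le (Ideal.IsPrime.ne_top inferInstance)
  rw [Ideal.span_singleton_le_iff_mem, Ideal.mem_comap]
  simpa using h

lemma smul_mem_iff {σ : Gal(L/ℚ)} (hσ : σ ∈ MulAction.stabilizer Gal(L/ℚ) v.asIdeal) (a : 𝓞 L) :
    σ • a ∈ v.asIdeal ↔ a ∈ v.asIdeal := by
  conv_lhs => rw [← MulAction.mem_stabilizer_iff.1 hσ]
  exact Ideal.smul_mem_pointwise_smul_iff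

lemma stab_map_B {σ : Gal(L/ℚ)} (hσ : σ ∈ MulAction.stabilizer Gal(L/ℚ) v.asIdeal) {x : L}
    (hx : x ∈ (dval v).B 0) : σ x ∈ (dval v).B 0 := by
  obtain ⟨a, d, hd, e⟩ := exists_frac v hx
  have hd' : (σ • d) ∉ v.asIdeal := by rwa [smul_mem_iff v hσ]
  have hne : ((σ • d : 𝓞 L) : L) ≠ 0 := fun h => hd' (by
    have : σ • d = 0 := RingOfIntegers.coe_injective (by simpa using h)
    rw [this]; exact zero_mem _)
  have h0 := (v_eq_zero_iff v hne).2 ⟨coe_mem_B_zero v _, by rwa [coe_mem_B_one]⟩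
  have e' : σ x = ((σ • a : 𝓞 L) : L) * ((σ • d : 𝓞 L) : L)⁻¹ := by
    rw [← div_eq_mul_inv, eq_div_iff hne, coe_smul', coe_smul', ← map_mul, e]
  rw [e']
  have h1 : ((σ • d : 𝓞 L) : L)⁻¹ ∈ (dval v).B 0 := by
    rw [DVal.mem_B]; right; rw [DVal.v_inv _ hne, h0]; simp
  simpa using DVal.B_mul _ (coe_mem_B_zero v (σ • a)) h1

/-- The action of the Galois group by ring automorphisms. -/
noncomputable def toAut : Gal(L/ℚ) →* RingAut L := MulSemiringAction.toRingAut Gal(L/ℚ) L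

@[simp] lemma toAut_apply (σ : Gal(L/ℚ)) (x : L) : toAut σ x = σ x := rfl

lemma toAut_injective : Function.Injective (toAut (L := L)) := fun σ τ h => by
  ext x
  rw [← toAut_apply, h, toAut_apply]

lemma stab_inv {σ : Gal(L/ℚ)} (hσ : σ ∈ MulAction.stabilizer Gal(L/ℚ) v.asIdeal) :
    (dval v).Inv (toAut σ) := by
  apply inv_of_map_B
  · intro x hx; exact stab_map_B v hσ hx
  · intro x hx; rw [← map_inv]; exact stab_map_B v (inv_mem hσ) hx

variable [IsGalois ℚ L]

lemma finite_quot : Finite (𝓞 L ⧸ v.asIdeal) :=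
  Ideal.finiteQuotientOfFreeOfNeBot _ v.ne_bot

/-- Local data of an abelian extension of `ℚ` at a finite place: any group of inertia
automorphisms together with a Frobenius lift. -/
lemma exists_loc (hcomm : ∀ σ τ : Gal(L/ℚ), σ * τ = τ * σ) {p : ℕ} (hp : p.Prime)
    (hpv : (p : 𝓞 L) ∈ v.asIdeal) (T : Subgroup Gal(L/ℚ)) (hT : T ≤ v.asIdeal.inertia Gal(L/ℚ)) :
    ∃ (φ : RingAut L) (π : L), (dval v).Loc (T.map toAut) φ p π := by
  have := finite_quot v
  obtain ⟨φ, hφ⟩ := IsArithFrobAt.exists_of_isInvariant ℤ Gal(L/ℚ) v.asIdeal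
  have hφs := hφ.mem_stabilizer
  obtain ⟨π, hπ0, hπ⟩ := exists_unif v
  have hcard : Nat.card (ℤ ⧸ v.asIdeal.under ℤ) = p := by
    rw [under_eq hp hpv]
    rw [Nat.card_congr (Int.quotientSpanNatEquivZMod p).toEquiv, Nat.card_zmod]
  refine ⟨toAut φ, π, hp, ?_, stab_inv v hφs, ?_, ?_, ?_, hπ0, hπ, ?_⟩
  · rintro _ ⟨σ, hσ, rfl⟩
    exact stab_inv v (Ideal.inertia_le_stabilizer _ (hT hσ))
  · rintro _ ⟨σ, hσ, rfl⟩ x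
    simp only [toAut_apply]
    exact DFunLike.congr_fun (hcomm φ σ) x
  · rintro _ ⟨σ, hσ, rfl⟩ x hx
    have hσ' := AddSubgroup.mem_inertia.1 (hT hσ)
    refine congr_B v (toAut σ : L →+* L).toMonoidWithZeroHom (MonoidWithZeroHom.id L) (coe_mem_B_zero v)
      (fun a ha => by simpa [coe_mem_B_one] using ha) (fun a => ?_) hx
    exact (coe_mem_B_one v (σ • a - a)).2 (hσ' a)
  · intro x hx
    refine congr_B v (toAut φ : L →+* L).toMonoidWithZeroHom (powMonoidWithZeroHom hp.ne_zero) (fun a => ?_)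
      (fun a ha => ?_) (fun a => ?_) hx
    · exact_mod_cast coe_mem_B_zero v (a ^ p)
    · intro h
      have : ((a ^ p : 𝓞 L) : L) ∈ (dval v).B 1 := by exact_mod_cast h
      rw [coe_mem_B_one] at this
      exact ha (v.isPrime.mem_of_pow_mem _ this)
    · have h1 := hφ a
      rw [hcard] at h1
      have := (coe_mem_B_one v _).2 h1
      exact this
  · have := (coe_mem_B_one v (p : 𝓞 L)).2 hpv
    simpa using this

/-- A tamely ramified group of inertia automorphisms has at most `p - 1` elements. -/
lemma tame (hcomm : ∀ σ τ : Gal(L/ℚ), σ * τ = τ * σ) {p : ℕ} (hp : p.Prime)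
    (hpv : (p : 𝓞 L) ∈ v.asIdeal) (T : Subgroup Gal(L/ℚ)) (hT : T ≤ v.asIdeal.inertia Gal(L/ℚ))
    (hc : (Nat.card T).Coprime p) : Nat.card T ≤ p - 1 := by
  obtain ⟨φ, π, hL⟩ := exists_loc v hcomm hp hpv T hT
  have e : Nat.card (T.map toAut) = Nat.card T :=
    (Nat.card_congr (T.equivMapOfInjective toAut toAut_injective).toEquiv).symm
  have : Finite (T.map toAut) := Finite.of_surjective _ (Subgroup.equivMapOfInjective _ toAut toAut_injective).surjective
  have := hL.card_le (by rwa [e])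
  rwa [e] at this

/-- The valuation of `p` is its ramification index, that is, the order of the inertia group. -/
lemma v_p {p : ℕ} (hp : p.Prime) (hpv : (p : 𝓞 L) ∈ v.asIdeal) :
    (dval v).v (p : L) = Nat.card (v.asIdeal.inertia Gal(L/ℚ)) := by
  have hpi : Prime (p : ℤ) := Nat.prime_iff_prime_int.1 hp
  let u : HeightOneSpectrum ℤ := ⟨Ideal.span {(p : ℤ)}, by rwa [Ideal.span_singleton_prime hpi.ne_zero],
    by simpa using hp.ne_zero⟩
  have : v.asIdeal.LiesOver u.asIdeal := ⟨(under_eq hp hpv).symm⟩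
  have h := HeightOneSpectrum.valuation_liesOver L u v (p : ℚ)
  rw [Ideal.ramificationIdx'_eq_ramificationIdx _ _ u.ne_bot, ← card_inertia_int_eq Gal(L/ℚ) _ v.ne_bot] at h
  rw [dval_v]
  have e : (algebraMap ℚ L) (p : ℚ) = p := by simp
  rw [← e, ← h, WithZero.log_pow]
  have e2 : u.valuation ℚ (p : ℚ) = WithZero.exp (-1) := by
    have := u.valuation_of_algebraMap (K := ℚ) (p : ℤ)
    rw [u.intValuation_singleton (by exact_mod_cast hp.ne_zero) rfl] at this
    simpa using this
  rw [e2]; simp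

/-- `L` is totally ramified of degree `|T|` over the fixed field of a group `T` of inertia
automorphisms, so valuations of elements of that field are multiples of `|T|`. -/
lemma dvd_v_of_fixed {T : Subgroup Gal(L/ℚ)} (hT : T ≤ v.asIdeal.inertia Gal(L/ℚ)) {x : L}
    (hx : ∀ σ ∈ T, σ x = x) : (Nat.card T : ℤ) ∣ (dval v).v x := by
  let K := IntermediateField.fixedField T
  have hxK : x ∈ K := fun σ => hx _ σ.2
  have : NumberField K := inferInstance
  have : IsGaloisGroup T K L := IsGaloisGroup.subgroup Gal(L/ℚ) ℚ L T
  let P := v.asIdeal.under (𝓞 K)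
  let u : HeightOneSpectrum (𝓞 K) := ⟨P, inferInstance, Ideal.under_ne_bot _ v.ne_bot⟩
  have : v.asIdeal.LiesOver u.asIdeal := ⟨rfl⟩
  have h := HeightOneSpectrum.valuation_liesOver L u v (⟨x, hxK⟩ : K)
  rw [Ideal.ramificationIdx'_eq_ramificationIdx _ _ u.ne_bot, ← card_eq_of_forall K T _ v.ne_bot
    fun σ a => ⟨_, AddSubgroup.mem_inertia.1 (hT σ.2) a, rfl⟩] at h
  rw [dval_v]
  have e : (algebraMap K L) ⟨x, hxK⟩ = x := rfl
  rw [e] at h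
  rw [← h, WithZero.log_pow, dvd_neg]
  simp

/-- For odd `p`, the inertia group at `p` of an abelian extension of `ℚ` is not isomorphic to
`(ℤ/p)²`. -/
lemma wild (hcomm : ∀ σ τ : Gal(L/ℚ), σ * τ = τ * σ) {p : ℕ} (hp : p.Prime) (hodd : 3 ≤ p)
    (hpv : (p : 𝓞 L) ∈ v.asIdeal) (hcard : Nat.card (v.asIdeal.inertia Gal(L/ℚ)) = p ^ 2)
    (hexp : ∀ σ ∈ v.asIdeal.inertia Gal(L/ℚ), σ ^ p = 1) : False := by
  obtain ⟨φ, π, hL⟩ := exists_loc v hcomm hp hpv _ le_rfl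
  have e : Nat.card ((v.asIdeal.inertia Gal(L/ℚ)).map toAut) = p ^ 2 := by
    rw [← hcard]
    exact (Nat.card_congr (Subgroup.equivMapOfInjective _ toAut toAut_injective).toEquiv).symm
  have : Finite ((v.asIdeal.inertia Gal(L/ℚ)).map toAut) :=
    Finite.of_surjective _ (Subgroup.equivMapOfInjective _ toAut toAut_injective).surjective
  have := finite_quot v
  have hmax : v.asIdeal.IsMaximal := v.isMaximal
  let _ := Ideal.Quotient.field v.asIdeal
  have : Fintype (𝓞 L ⧸ v.asIdeal) := Fintype.ofFinite _
  have hch : CharP (𝓞 L ⧸ v.asIdeal) p := by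
    have : ((p : ℕ) : 𝓞 L ⧸ v.asIdeal) = 0 := by
      have := Ideal.Quotient.eq_zero_iff_mem.2 hpv
      simpa using this
    exact (CharP.charP_iff_prime_eq_zero hp).2 this
  have : Fact p.Prime := ⟨hp⟩
  obtain ⟨f, -, hf⟩ := FiniteField.card (𝓞 L ⧸ v.asIdeal) p
  refine hL.wild hodd e ?_ ?_ (by exact_mod_cast hp.ne_zero) ?_ ?_ (f := f) f.ne_zero ?_
  · rintro _ ⟨σ, hσ, rfl⟩
    rw [← map_pow, hexp σ hσ, map_one]
  · rintro _ ⟨σ, hσ, rfl⟩ _ ⟨τ, hτ, rfl⟩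
    rw [← map_mul, hcomm, map_mul]
  · rw [v_p v hp hpv, hcard]; simp
  · intro x _ hx
    have := dvd_v_of_fixed v (T := v.asIdeal.inertia Gal(L/ℚ)) le_rfl fun σ hσ => hx _ ⟨σ, hσ, rfl⟩
    rw [hcard] at this
    exact_mod_cast this
  · intro x hx
    have hpf : p ^ (f : ℕ) ≠ 0 := pow_ne_zero _ hp.ne_zero
    refine congr_B v (powMonoidWithZeroHom hpf) (MonoidWithZeroHom.id L) (coe_mem_B_zero v)
      (fun a ha => by simpa [coe_mem_B_one] using ha) (fun a => ?_) hx
    have h1 : a ^ p ^ (f : ℕ) - a ∈ v.asIdeal := by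
      rw [← Ideal.Quotient.eq_zero_iff_mem, map_sub, map_pow, ← hf, FiniteField.pow_card, sub_self]
    have := (coe_mem_B_one v _).2 h1
    simpa using this

end NFLoc

/-! ### Restriction to subfields -/

namespace NFLoc

open NumberField IsDedekindDomain
open scoped Pointwise

variable {L : Type*} [Field L] [NumberField L]

/-- The inertia group of a finite place in the Galois group over `ℚ`. -/
abbrev In {L : Type*} [Field L] [NumberField L] (v : HeightOneSpectrum (𝓞 L)) : Subgroup Gal(L/ℚ) :=
  v.asIdeal.inertia Gal(L/ℚ)

lemma mem_In {v : HeightOneSpectrum (𝓞 L)} {σ : Gal(L/ℚ)} :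
    σ ∈ In v ↔ ∀ a : 𝓞 L, σ • a - a ∈ v.asIdeal := AddSubgroup.mem_inertia

variable (v : HeightOneSpectrum (𝓞 L)) (K : IntermediateField ℚ L)

/-- The place of a subfield below a given place. -/
noncomputable def below : HeightOneSpectrum (𝓞 K) :=
  ⟨v.asIdeal.under (𝓞 K), inferInstance, Ideal.under_ne_bot _ v.ne_bot⟩

lemma natCast_mem_below {p : ℕ} (h : (p : 𝓞 L) ∈ v.asIdeal) : (p : 𝓞 K) ∈ (below v K).asIdeal := by
  change algebraMap (𝓞 K) (𝓞 L) p ∈ v.asIdeal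
  simpa using h

variable [IsGalois ℚ L]

lemma card_inf_eq : Nat.card (In v ⊓ K.fixingSubgroup : Subgroup Gal(L/ℚ)) =
    v.asIdeal.ramificationIdx (𝓞 K) := by
  have hG : IsGaloisGroup K.fixingSubgroup K L := IsGaloisGroup.of_fixedPoints_eq Gal(L/ℚ) ℚ L _ _
    (IsGalois.fixedField_fixingSubgroup K)
  rw [← card_inertia_eq K K.fixingSubgroup _ v.ne_bot]
  refine Nat.card_congr
    { toFun := fun σ => ⟨⟨σ.1, σ.2.2⟩, AddSubgroup.mem_inertia.2 fun a => AddSubgroup.mem_inertia.1 σ.2.1 a⟩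
      invFun := fun σ => ⟨σ.1.1, AddSubgroup.mem_inertia.2 fun a => AddSubgroup.mem_inertia.1 σ.2 a, σ.1.2⟩
      left_inv := fun _ => rfl
      right_inv := fun _ => rfl }

variable [IsGalois ℚ K]

lemma card_below : Nat.card (In (below v K)) * Nat.card (In v ⊓ K.fixingSubgroup : Subgroup Gal(L/ℚ)) =
    Nat.card (In v) := by
  rw [card_inf_eq, card_inertia_int_eq Gal(L/ℚ) _ v.ne_bot, card_inertia_int_eq Gal(K/ℚ) _ (below v K).ne_bot]
  have : v.asIdeal.LiesOver (below v K).asIdeal := ⟨rfl⟩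
  exact (Ideal.ramificationIdx_tower _ _).symm

lemma restrict_mem {σ : Gal(L/ℚ)} (hσ : σ ∈ In v) :
    AlgEquiv.restrictNormalHom K σ ∈ In (below v K) := by
  rw [mem_In] at hσ ⊢
  intro a
  change algebraMap (𝓞 K) (𝓞 L) _ ∈ v.asIdeal
  convert hσ (algebraMap (𝓞 K) (𝓞 L) a) using 1
  apply RingOfIntegers.coe_injective
  rw [map_sub, map_sub, map_sub]
  congr 1
  exact AlgEquiv.restrictNormal_commutes σ K (a : K)

lemma ker_restrict : (AlgEquiv.restrictNormalHom K : Gal(L/ℚ) →* Gal(K/ℚ)).ker = K.fixingSubgroup := by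
  ext σ
  rw [MonoidHom.mem_ker, IntermediateField.mem_fixingSubgroup_iff]
  constructor
  · intro h x hx
    have := AlgEquiv.restrictNormal_commutes σ K ⟨x, hx⟩
    change algebraMap K L (AlgEquiv.restrictNormalHom K σ ⟨x, hx⟩) = _ at this
    rw [h] at this
    exact this.symm
  · intro h
    ext x
    exact (AlgEquiv.restrictNormal_commutes σ K x).trans (h x x.2)

/-- Restriction maps the inertia group of a place onto that of the place below. -/
lemma map_In : (In v).map (AlgEquiv.restrictNormalHom K) = In (below v K) := by
  apply Subgroup.eq_of_le_of_card_ge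
  · rintro _ ⟨σ, hσ, rfl⟩
    exact restrict_mem v K hσ
  · rw [← Subgroup.relIndex_ker, ker_restrict]
    have h1 := card_below v K
    have h2 : Nat.card (In v ⊓ K.fixingSubgroup : Subgroup Gal(L/ℚ)) * K.fixingSubgroup.relIndex (In v)
      = Nat.card (In v) := by
      rw [← Subgroup.inf_relIndex_left, ← Subgroup.relIndex_bot_left, ← Subgroup.relIndex_bot_left]
      exact Subgroup.relIndex_mul_relIndex _ _ _ bot_le inf_le_left
    have h3 : 0 < Nat.card (In v ⊓ K.fixingSubgroup : Subgroup Gal(L/ℚ)) := Nat.card_pos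
    nlinarith

/-- For odd `p`, no quotient of the inertia group at `p` is isomorphic to `(ℤ/p)²`: such a quotient
would be the inertia group of the fixed field of `A`. -/
lemma wild_sub (hcomm : ∀ σ τ : Gal(L/ℚ), σ * τ = τ * σ) {p : ℕ} (hp : p.Prime) (hodd : 3 ≤ p)
    (hpv : (p : 𝓞 L) ∈ v.asIdeal) (A : Subgroup Gal(L/ℚ))
    (hcard : A.relIndex (In v) = p ^ 2) (hexp : ∀ σ ∈ In v, σ ^ p ∈ A) : False := by
  have hn : A.Normal := ⟨fun n hn g => by rw [hcomm g n, mul_assoc, mul_inv_cancel, mul_one]; exact hn⟩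
  let K := IntermediateField.fixedField A
  have hK : IsGalois ℚ K := IsGalois.of_fixedField_normal_subgroup A
  have hfix : K.fixingSubgroup = A := IntermediateField.fixingSubgroup_fixedField A
  have hsurj : Function.Surjective (AlgEquiv.restrictNormalHom K : Gal(L/ℚ) →* _) :=
    AlgEquiv.restrictNormalHom_surjective L
  have hmap := map_In v K
  refine wild (below v K) ?_ hp hodd (natCast_mem_below v K hpv) ?_ ?_
  · intro σ τ
    obtain ⟨σ, rfl⟩ := hsurj σ
    obtain ⟨τ, rfl⟩ := hsurj τ
    rw [← map_mul, hcomm, map_mul]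
  · change Nat.card (In (below v K)) = _
    rw [← hmap, ← Subgroup.relIndex_ker, ker_restrict, hfix, hcard]
  · intro σ hσ
    change σ ∈ In (below v K) at hσ
    rw [← hmap] at hσ
    obtain ⟨σ, hσ, rfl⟩ := hσ
    rw [← map_pow, ← MonoidHom.mem_ker, ker_restrict, hfix]
    exact hexp σ hσ

/-- A normal subgroup containing one inertia group above each prime number is everything: by
Minkowski, the only number field with no ramified prime is `ℚ`. -/
lemma eq_top_of_In_le (P : ℕ → HeightOneSpectrum (𝓞 L)) (hP : ∀ p, p.Prime → (p : 𝓞 L) ∈ (P p).asIdeal)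
    (H : Subgroup Gal(L/ℚ)) [H.Normal] (h : ∀ p, p.Prime → In (P p) ≤ H) : H = ⊤ := by
  let K := IntermediateField.fixedField H
  have hK : IsGalois ℚ K := IsGalois.of_fixedField_normal_subgroup H
  have hfix : K.fixingSubgroup = H := IntermediateField.fixingSubgroup_fixedField H
  have h1 : Module.finrank ℚ K = 1 := by
    by_contra hne
    have hlt : 1 < Module.finrank ℚ K := lt_of_le_of_ne Module.finrank_pos (Ne.symm hne)
    obtain ⟨p, hp, hram⟩ := NumberField.exists_not_isUnramifiedAt_int_of_isGalois (K := K) (𝒪 := 𝓞 K) hlt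
    have := card_below (P p) K
    rw [hfix, inf_eq_left.2 (h p hp)] at this
    have hc : Nat.card (In (below (P p) K)) = 1 := by
      have h3 : 0 < Nat.card (In (P p)) := Nat.card_pos
      nlinarith
    rw [card_inertia_int_eq Gal(K/ℚ) _ (below (P p) K).ne_bot] at hc
    have hmax : (below (P p) K).asIdeal.IsMaximal := (below (P p) K).isMaximal
    have : ((below (P p) K).asIdeal.under ℤ).IsMaximal := inferInstance
    have : Finite (ℤ ⧸ (below (P p) K).asIdeal.under ℤ) :=
      Ideal.finiteQuotientOfFreeOfNeBot _ (Ideal.under_ne_bot _ (below (P p) K).ne_bot)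
    have : Finite ((below (P p) K).asIdeal.under ℤ).ResidueField :=
      Finite.of_surjective _ (Ideal.bijective_algebraMap_quotient_residueField _).2
    rw [Ideal.ramificationIdx_eq_one_iff] at hc
    exact hram _ inferInstance (natCast_mem_below _ K (hP p hp)) hc
  rw [IntermediateField.finrank_eq_one_iff] at h1
  rw [← hfix, h1, IntermediateField.fixingSubgroup_bot]

end NFLoc

/-! ### Bounding the order of a finite abelian group -/

namespace NFLoc

open NumberField IsDedekindDomain
open scoped Pointwise

lemma card_ker_comp_le {A B C : Type*} [Group A] [Group B] [Group C] [Finite A] [Finite B]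
    (f : A →* B) (g : B →* C) : Nat.card (g.comp f).ker ≤ Nat.card g.ker * Nat.card f.ker := by
  have h1 : f.ker ≤ (g.comp f).ker := fun x hx => by
    rw [MonoidHom.mem_ker] at hx ⊢; simp [hx]
  have h2 := Subgroup.relIndex_mul_relIndex ⊥ f.ker (g.comp f).ker bot_le h1
  rw [Subgroup.relIndex_bot_left, Subgroup.relIndex_bot_left, Subgroup.relIndex_ker] at h2
  have h3 : Nat.card ((g.comp f).ker.map f) ≤ Nat.card g.ker := by
    apply Subgroup.card_le_of_le
    rintro _ ⟨x, hx, rfl⟩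
    exact hx
  rw [← h2, mul_comm]
  exact Nat.mul_le_mul_right _ h3

lemma card_ker_pow_le {H : Type*} [CommGroup H] [Finite H] {p : ℕ}
    (hc : Nat.card (powMonoidHom p : H →* H).ker ≤ p) (k : ℕ) :
    Nat.card (powMonoidHom (p ^ k) : H →* H).ker ≤ p ^ k := by
  induction k with
  | zero =>
    have : (powMonoidHom (p ^ 0) : H →* H).ker = ⊥ := by
      ext x; simp [MonoidHom.mem_ker]
    rw [this]; simp
  | succ k ih =>
    have e : (powMonoidHom (p ^ (k + 1)) : H →* H) = (powMonoidHom (p ^ k)).comp (powMonoidHom p) := by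
      ext x; simp [← pow_mul, pow_succ']
    rw [e, pow_succ]
    exact (card_ker_comp_le _ _).trans (Nat.mul_le_mul ih hc)

/-- If every `p`-power torsion element of a finite abelian group is killed by `p ^ k`, the
`p`-torsion is cyclic and prime-to-`p` subgroups have at most `p - 1` elements, then the order is
at most `φ(p ^ (k + 1))`. -/
lemma card_le_of_torsion {H : Type*} [CommGroup H] [Finite H] {p : ℕ} (hp : p.Prime) (k : ℕ)
    (ha : ∀ h : H, (∃ n, h ^ p ^ n = 1) → h ^ p ^ k = 1)
    (hb : ∀ T : Subgroup H, (Nat.card T).Coprime p → Nat.card T ≤ p - 1)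
    (hc : Nat.card (powMonoidHom p : H →* H).ker ≤ p) : Nat.card H ≤ p ^ k * (p - 1) := by
  have : Fact p.Prime := ⟨hp⟩
  set f : H →* H := powMonoidHom (p ^ k)
  have h1 : (Nat.card f.range).Coprime p := by
    rw [Nat.coprime_comm, hp.coprime_iff_not_dvd]
    intro hd
    obtain ⟨⟨_, h, rfl⟩, hr⟩ := exists_prime_orderOf_dvd_card' p hd
    have h2 : (h ^ p ^ k) ^ p = 1 := by
      have := pow_orderOf_eq_one (⟨f h, h, rfl⟩ : f.range)
      rw [hr] at this
      exact congrArg Subtype.val this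
    have h3 := ha h ⟨k + 1, by rw [pow_succ, pow_mul, h2]⟩
    have : (⟨f h, h, rfl⟩ : f.range) = 1 := Subtype.ext h3
    rw [this, orderOf_one] at hr
    exact hp.one_lt.ne hr
  have h2 := f.ker.card_mul_index
  rw [Subgroup.index_ker] at h2
  rw [← h2]
  exact Nat.mul_le_mul (card_ker_pow_le hc k) (hb _ h1)

/-- The `p`-torsion has order at most `p` as soon as there is no quotient of order `p ^ 2` and
exponent `p`. -/
lemma card_ker_le {H : Type*} [CommGroup H] [Finite H] {p : ℕ} (hp : p.Prime)
    (hW : ∀ A : Subgroup H, A.index = p ^ 2 → (∀ σ, σ ^ p ∈ A) → False) :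
    Nat.card (powMonoidHom p : H →* H).ker ≤ p := by
  have : Fact p.Prime := ⟨hp⟩
  set f : H →* H := powMonoidHom p
  have h1 := f.ker.card_mul_index
  rw [Subgroup.index_ker, ← f.range.card_mul_index, mul_comm] at h1
  have h2 : Nat.card f.ker = f.range.index := Nat.eq_of_mul_eq_mul_left Nat.card_pos h1
  rw [h2, Subgroup.index]
  by_contra! hlt
  have hpg : IsPGroup p (H ⧸ f.range) := by
    intro g
    induction g using QuotientGroup.induction_on with
    | H z =>
      refine ⟨1, ?_⟩
      rw [pow_one, ← QuotientGroup.mk_pow, QuotientGroup.eq_one_iff]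
      exact ⟨z, rfl⟩
  obtain ⟨n, hn⟩ := IsPGroup.iff_card.1 hpg
  have hn2 : 2 ≤ n := by
    by_contra! h
    have : p ^ n ≤ p ^ 1 := Nat.pow_le_pow_right hp.pos (by omega)
    rw [hn] at hlt; rw [pow_one] at this
    omega
  obtain ⟨B, hB⟩ := Sylow.exists_subgroup_card_pow_prime p (n := n - 2) (G := H ⧸ f.range)
    (by rw [hn]; exact pow_dvd_pow _ (by omega))
  have hBi : B.index = p ^ 2 := by
    have := B.card_mul_index
    rw [hB, hn] at this
    have e : p ^ n = p ^ (n - 2) * p ^ 2 := by rw [← pow_add]; congr 1; omega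
    rw [e] at this
    exact Nat.eq_of_mul_eq_mul_left (pow_pos hp.pos _) this
  refine hW (B.comap (QuotientGroup.mk' f.range)) ?_ ?_
  · rw [Subgroup.index_comap_of_surjective _ (QuotientGroup.mk'_surjective _), hBi]
  · intro σ
    rw [Subgroup.mem_comap]
    have : QuotientGroup.mk' f.range (σ ^ p) = 1 := by
      rw [QuotientGroup.mk'_apply, QuotientGroup.eq_one_iff]
      exact ⟨σ, rfl⟩
    rw [this]; exact one_mem _

variable {L : Type*} [Field L] [NumberField L] [IsGalois ℚ L]

/-- For odd `p`, the order of inertia at `p` is controlled by the exponent `p ^ k` of its `p`-part. -/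
lemma card_In_le (v : HeightOneSpectrum (𝓞 L)) (hcomm : ∀ σ τ : Gal(L/ℚ), σ * τ = τ * σ) {p : ℕ}
    (hp : p.Prime) (hodd : 3 ≤ p) (hpv : (p : 𝓞 L) ∈ v.asIdeal) (k : ℕ)
    (ha : ∀ σ ∈ In v, (∃ n, σ ^ p ^ n = 1) → σ ^ p ^ k = 1) :
    Nat.card (In v) ≤ p ^ k * (p - 1) := by
  let _ : CommGroup (In v) := { (inferInstance : Group (In v)) with
    mul_comm := fun a b => Subtype.ext (hcomm a b) }
  refine card_le_of_torsion hp k ?_ ?_ (card_ker_le hp ?_)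
  · rintro ⟨σ, hσ⟩ ⟨n, hn⟩
    exact Subtype.ext (ha σ hσ ⟨n, congrArg Subtype.val hn⟩)
  · intro T hT
    have e : Nat.card (T.map (In v).subtype) = Nat.card T :=
      (Nat.card_congr (T.equivMapOfInjective _ (In v).subtype_injective).toEquiv).symm
    rw [← e] at hT ⊢
    exact tame v hcomm hp hpv _ (by rintro _ ⟨σ, -, rfl⟩; exact σ.2) hT
  · intro A hA hpow
    refine wild_sub v hcomm hp hodd hpv (A.map (In v).subtype) ?_ ?_
    · rw [Subgroup.relIndex, ← hA]
      congr 1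
      ext x
      simp [Subgroup.mem_subgroupOf]
    · intro σ hσ
      exact ⟨_, hpow ⟨σ, hσ⟩, rfl⟩

/-- In an abelian extension of `ℚ` there is no tame ramification at `2`, since `p - 1 = 1`. -/
lemma In_two (v : HeightOneSpectrum (𝓞 L)) (hcomm : ∀ σ τ : Gal(L/ℚ), σ * τ = τ * σ)
    (hpv : (2 : 𝓞 L) ∈ v.asIdeal) {σ : Gal(L/ℚ)} (hσ : σ ∈ In v) : ∃ n, σ ^ 2 ^ n = 1 := by
  obtain ⟨n, m, hm, e⟩ := Nat.exists_eq_two_pow_mul_odd (orderOf_pos σ).ne'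
  refine ⟨n, ?_⟩
  have ho : orderOf (σ ^ 2 ^ n) = m := by
    rw [orderOf_pow, e, Nat.gcd_mul_right_left]
    exact Nat.mul_div_cancel_left _ (by positivity)
  have := tame v hcomm Nat.prime_two (by exact_mod_cast hpv) (Subgroup.zpowers (σ ^ 2 ^ n))
    (by rw [Subgroup.zpowers_le]; exact pow_mem hσ _)
    (by rw [Nat.card_zpowers, ho]; exact Nat.coprime_two_right.2 hm)
  rw [Nat.card_zpowers] at this
  exact orderOf_eq_one_iff.1 (le_antisymm this (orderOf_pos _))

end NFLoc

/-! ### Inertia and roots of unity -/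

namespace NFLoc

open NumberField IsDedekindDomain
open scoped Pointwise

variable {L : Type*} [Field L] [NumberField L]

lemma not_mem_of_coprime (v : HeightOneSpectrum (𝓞 L)) {p m : ℕ} (hpv : (p : 𝓞 L) ∈ v.asIdeal)
    (h : m.Coprime p) : (m : 𝓞 L) ∉ v.asIdeal := by
  intro hm
  apply v.isPrime.ne_top
  rw [Ideal.eq_top_iff_one]
  obtain ⟨a, b, hab⟩ := Nat.isCoprime_iff_coprime.2 h
  have : (a : 𝓞 L) * m + b * p = 1 := by exact_mod_cast congrArg (Int.cast : ℤ → 𝓞 L) hab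
  rw [← this]
  exact add_mem (Ideal.mul_mem_left _ _ hm) (Ideal.mul_mem_left _ _ hpv)

/-- Roots of unity of order prime to `p` are distinct modulo a place above `p`, so inertia fixes them. -/
lemma fix_root (v : HeightOneSpectrum (𝓞 L)) {p m : ℕ} (hp : p.Prime) (hpv : (p : 𝓞 L) ∈ v.asIdeal)
    (h : m.Coprime p) {η : L} (hη : η ^ m = 1) {σ : Gal(L/ℚ)} (hσ : σ ∈ In v) : σ η = η := by
  have hm0 : 0 < m := Nat.pos_of_ne_zero fun h0 => by
    subst h0
    rw [Nat.coprime_zero_left] at h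
    exact hp.one_lt.ne' h
  have hint : IsIntegral ℤ η := IsIntegral.of_pow hm0 (by rw [hη]; exact isIntegral_one)
  let a : 𝓞 L := ⟨η, hint⟩
  have ha : a ^ m = 1 := RingOfIntegers.ext hη
  have hb : (σ • a) ^ m = 1 := by rw [← smul_pow', ha, smul_one]
  have hsub := mem_In.1 hσ a
  have ha' : a * a ^ (m - 1) = 1 := by rw [← pow_succ', Nat.sub_add_cancel hm0, ha]
  set θ := (σ • a) * a ^ (m - 1) with hθ
  have hθm : θ ^ m = 1 := by
    rw [hθ, mul_pow, hb, ← pow_mul, mul_comm (m - 1), pow_mul, ha, one_pow, one_mul]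
  have hθ1 : θ - 1 ∈ v.asIdeal := by
    have : θ - 1 = (σ • a - a) * a ^ (m - 1) := by rw [sub_mul, ha']
    rw [this]; exact Ideal.mul_mem_right _ _ hsub
  have : θ = 1 := by
    by_contra hne
    have hg : ∑ i ∈ Finset.range m, θ ^ i = 0 := by
      have := mul_geom_sum θ m
      rw [hθm, sub_self] at this
      exact (mul_eq_zero.1 this).resolve_left (sub_ne_zero.2 hne)
    apply not_mem_of_coprime v hpv h
    rw [← Ideal.Quotient.eq_zero_iff_mem] at hθ1 ⊢
    rw [map_sub, map_one, sub_eq_zero] at hθ1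
    have := congrArg (Ideal.Quotient.mk v.asIdeal) hg
    rw [map_sum] at this
    simpa [hθ1] using this
  have e : σ • a = a := by
    calc σ • a = (σ • a) * (a * a ^ (m - 1)) := by rw [ha', mul_one]
      _ = θ * a := by rw [hθ]; ring
      _ = a := by rw [this, one_mul]
  exact congrArg (algebraMap (𝓞 L) L) e

lemma unit_pow_odd {p e t : ℕ} (hp : p.Prime) (he : 1 ≤ e) (u : (ZMod (p ^ e))ˣ) (h : u ^ p ^ t = 1) :
    u ^ p ^ (e - 1) = 1 := by
  have h1 := ZMod.pow_totient u
  rw [Nat.totient_prime_pow hp he] at h1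
  rw [← orderOf_dvd_iff_pow_eq_one] at h h1 ⊢
  refine Nat.Coprime.dvd_of_dvd_mul_right ?_ h1
  refine Nat.Coprime.coprime_dvd_left h (Nat.Coprime.pow_left _ ?_)
  rw [hp.coprime_iff_not_dvd]
  intro hd
  have := Nat.le_of_dvd (Nat.sub_pos_of_lt hp.one_lt) hd
  have := hp.pos
  omega

/-- The group of units modulo `2 ^ e` is not cyclic for `e ≥ 3`, hence its exponent divides
`2 ^ (e - 2)`. -/
lemma unit_pow_two {e : ℕ} (he : 3 ≤ e) (u : (ZMod (2 ^ e))ˣ) : u ^ 2 ^ (e - 2) = 1 := by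
  have h1 := ZMod.pow_totient u
  rw [Nat.totient_prime_pow Nat.prime_two (by omega)] at h1
  simp only [Nat.add_one_sub_one, mul_one] at h1
  rw [← orderOf_dvd_iff_pow_eq_one, Nat.dvd_prime_pow Nat.prime_two] at h1
  obtain ⟨k, hk, e1⟩ := h1
  rcases hk.lt_or_eq with hk | hk
  · rw [← orderOf_dvd_iff_pow_eq_one, e1]
    exact pow_dvd_pow _ (by omega)
  · exfalso
    have : NeZero (2 ^ e) := ⟨by positivity⟩
    have hc : IsCyclic (ZMod (2 ^ e))ˣ := by
      apply isCyclic_of_orderOf_eq_card u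
      rw [e1, hk, Nat.card_eq_fintype_card, ZMod.card_units_eq_totient, Nat.totient_prime_pow Nat.prime_two (by omega)]
      simp
    rw [ZMod.isCyclic_units_two_pow_iff] at hc
    omega

/-- If `p ^ e` is the exact power of `p` in `n`, inertia at `p` acts on the `n`-th roots of unity
through the `p ^ e`-th ones, so `σ ^ r` acts trivially as soon as `r` kills the images of `σ` in the
units modulo `p ^ e`. -/
lemma pow_fix_root (v : HeightOneSpectrum (𝓞 L)) {p n r : ℕ} (hp : p.Prime) (hpv : (p : 𝓞 L) ∈ v.asIdeal)
    (hn : n ≠ 0) {ζ : L} (hζ : IsPrimitiveRoot ζ n) {σ : Gal(L/ℚ)} (hσ : σ ∈ In v)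
    (hr : ∀ u : (ZMod (p ^ n.factorization p))ˣ, (∃ χ : Gal(L/ℚ) →* (ZMod (p ^ n.factorization p))ˣ, χ σ = u) → u ^ r = 1) :
    (σ ^ r) ζ = ζ := by
  set e := n.factorization p
  set n' := n / p ^ e with hn'
  have hmul : p ^ e * n' = n := Nat.ordProj_mul_ordCompl_eq_self n p
  have hη : IsPrimitiveRoot (ζ ^ n') (p ^ e) := hζ.pow (Nat.pos_of_ne_zero hn) (by rw [mul_comm]; exact hmul.symm)
  have : NeZero (p ^ e) := ⟨pow_ne_zero _ hp.ne_zero⟩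
  have h1 : (σ ^ r) (ζ ^ n') = ζ ^ n' := by
    rw [← hη.autToPow_spec ℚ (σ ^ r), map_pow, hr _ ⟨hη.autToPow ℚ, rfl⟩]
    by_cases h1 : p ^ e = 1
    · rw [h1] at hη
      have := hη.pow_eq_one
      rw [pow_one] at this
      rw [this, one_pow]
    · have : Fact (1 < p ^ e) := ⟨by have := pow_pos hp.pos e; omega⟩
      rw [Units.val_one, ZMod.val_one, pow_one]
  have hcop : n'.Coprime p := (Nat.coprime_ordCompl hp hn).symm
  have h2 : (σ ^ r) (ζ ^ p ^ e) = ζ ^ p ^ e :=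
    fix_root v hp hpv hcop (by rw [← pow_mul, hmul, hζ.pow_eq_one]) (pow_mem hσ r)
  have hζ0 : ζ ≠ 0 := hζ.ne_zero hn
  obtain ⟨a, b, hab⟩ := Nat.isCoprime_iff_coprime.2 (hcop.pow_right e)
  have key : ζ = (ζ ^ n') ^ a * (ζ ^ p ^ e) ^ b := by
    rw [← zpow_natCast, ← zpow_natCast, ← zpow_mul, ← zpow_mul, ← zpow_add₀ hζ0, mul_comm _ a, mul_comm _ b, hab,
      zpow_one]
  calc (σ ^ r) ζ = (σ ^ r) ((ζ ^ n') ^ a * (ζ ^ p ^ e) ^ b) := by rw [← key]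
    _ = ζ := by rw [map_mul, map_zpow₀, map_zpow₀, h1, h2, ← key]

end NFLoc

/-! ### Real quadratic fields unramified outside 2 -/

namespace NFLoc

open NumberField IsDedekindDomain
open scoped Pointwise

variable {L : Type*} [Field L] [NumberField L]

lemma exists_place {p : ℕ} (hp : p.Prime) : ∃ v : HeightOneSpectrum (𝓞 L), (p : 𝓞 L) ∈ v.asIdeal := by
  have hpi : Prime (p : ℤ) := Nat.prime_iff_prime_int.1 hp
  have : (Ideal.span {(p : ℤ)}).IsPrime := by rwa [Ideal.span_singleton_prime hpi.ne_zero]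
  obtain ⟨⟨P, hP, hl⟩⟩ := (Ideal.span {(p : ℤ)}).nonempty_primesOver (S := 𝓞 L)
  have hmem : (p : 𝓞 L) ∈ P := by
    have : (p : ℤ) ∈ P.under ℤ := by rw [← hl.over]; exact Ideal.mem_span_singleton_self _
    rw [Ideal.mem_comap] at this
    simpa using this
  refine ⟨⟨P, hP, ?_⟩, hmem⟩
  rintro rfl
  simp only [Ideal.mem_bot, Nat.cast_eq_zero] at hmem
  exact hp.ne_zero hmem

lemma card_sup_le {G : Type*} [Group G] [Finite G] (A B : Subgroup G) [B.Normal] :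
    Nat.card (A ⊔ B : Subgroup G) ≤ Nat.card A * Nat.card B := by
  have : Nat.card ((A : Set G) * (B : Set G) : Set G) ≤ Nat.card A * Nat.card B := Set.natCard_mul_le
  rwa [← Subgroup.mul_normal] at this

lemma card_finset_sup_le {G : Type*} [Group G] [Finite G] (hn : ∀ B : Subgroup G, B.Normal) {ι : Type*} (s : Finset ι)
    (A : ι → Subgroup G) : Nat.card (s.sup A : Subgroup G) ≤ ∏ i ∈ s, Nat.card (A i) := by
  classical
  induction s using Finset.induction_on with
  | empty => simp
  | insert a s ha ih =>
    rw [Finset.prod_insert ha, Finset.sup_insert]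
    have := hn (s.sup A)
    exact (card_sup_le _ _).trans (Nat.mul_le_mul_left _ ih)

variable [IsGalois ℚ L]

/-- A real quadratic field unramified outside `2` is `ℚ(√2)`. -/
lemma exists_sqrt_two (P : ℕ → HeightOneSpectrum (𝓞 L)) (hP : ∀ p, p.Prime → (p : 𝓞 L) ∈ (P p).asIdeal)
    (φ : L →+* ℂ) (c : Gal(L/ℚ)) (hc : ∀ x, φ (c x) = (starRingEnd ℂ) (φ x))
    (A : Subgroup Gal(L/ℚ)) (hA : A.index = 2) (hcA : c ∈ A) (hodd : ∀ p, p.Prime → p ≠ 2 → In (P p) ≤ A) :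
    ∃ x : L, x ^ 2 = 2 ∧ ∀ σ ∈ A, σ x = x := by
  have hfix : (IntermediateField.fixedField A).fixingSubgroup = A := IntermediateField.fixingSubgroup_fixedField A
  obtain ⟨τ, hτ⟩ : ∃ τ, τ ∉ A := by
    by_contra! h
    have : A = ⊤ := eq_top_iff.2 fun x _ => h x
    rw [this, Subgroup.index_top] at hA
    omega
  obtain ⟨α, hα, hne⟩ : ∃ α ∈ IntermediateField.fixedField A, τ α ≠ α := by
    by_contra! h
    rw [← hfix] at hτ
    exact hτ ((IntermediateField.mem_fixingSubgroup_iff _ _).2 h)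
  have hmul : ∀ a b, a * b ∈ A ↔ (a ∈ A ↔ b ∈ A) := fun a b => Subgroup.mul_mem_iff_of_index_two hA
  have hα' : ∀ σ ∈ A, σ α = α := fun σ hσ => hα ⟨σ, hσ⟩
  have hout : ∀ σ, σ ∉ A → σ α = τ α := by
    intro σ hσ
    have h1 : τ⁻¹ * σ ∈ A := by rw [hmul, inv_mem_iff]; tauto
    calc σ α = τ ((τ⁻¹ * σ) α) := by rw [← AlgEquiv.mul_apply]; simp
      _ = τ α := by rw [hα' _ h1]
  set y := α - τ α with hy
  have hy0 : y ≠ 0 := sub_ne_zero.2 hne.symm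
  have hyA : ∀ σ ∈ A, σ y = y := by
    intro σ hσ
    have h1 : σ (τ α) = τ α := by
      rw [← AlgEquiv.mul_apply]; apply hout; rw [hmul]; tauto
    rw [hy, map_sub, h1, hα' σ hσ]
  have hyA' : ∀ σ, σ ∉ A → σ y = -y := by
    intro σ hσ
    have h1 : σ (τ α) = α := by
      rw [← AlgEquiv.mul_apply]; apply hα'; rw [hmul]; tauto
    rw [hy, map_sub, h1, hout σ hσ]; ring
  have hysq : ∀ σ : Gal(L/ℚ), σ (y ^ 2) = y ^ 2 := by
    intro σ
    rw [map_pow]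
    by_cases h : σ ∈ A
    · rw [hyA σ h]
    · rw [hyA' σ h, neg_sq]
  obtain ⟨r, hr⟩ : ∃ r : ℚ, (r : L) = y ^ 2 := by
    have : y ^ 2 ∈ (⊥ : IntermediateField ℚ L) := by
      rw [IsGalois.mem_bot_iff_fixed]; exact hysq
    rw [IntermediateField.mem_bot] at this
    simpa using this
  have hrpos : 0 < r := by
    have hreal : (starRingEnd ℂ) (φ y) = φ y := by rw [← hc, hyA c hcA]
    obtain ⟨z, hz⟩ := Complex.conj_eq_iff_real.1 hreal
    have h1 : ((r : ℝ) : ℂ) = ((z ^ 2 : ℝ) : ℂ) := by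
      have := congrArg φ hr
      rw [map_pow, hz] at this
      simpa using this
    have h2 : (r : ℝ) = z ^ 2 := by exact_mod_cast h1
    have hz0 : z ≠ 0 := by
      rintro rfl
      apply hy0
      apply φ.injective
      rw [hz]; simp
    have : (0 : ℝ) < r := by rw [h2]; positivity
    exact_mod_cast this
  -- the number `r` is a square times a squarefree positive integer
  obtain ⟨s, x, hs, hx, hxy⟩ : ∃ (s : ℕ) (x : L), Squarefree s ∧ x ^ 2 = s ∧ ∃ q : ℚ, q ≠ 0 ∧ x = q * y := by
    obtain ⟨s, t, -, ht, hst, hsf⟩ := Nat.sq_mul_squarefree_of_pos (n := r.num.natAbs * r.den)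
      (Nat.mul_pos (Int.natAbs_pos.2 (Rat.num_pos.2 hrpos).ne') r.den_pos)
    refine ⟨s, ((r.den / t : ℚ) : ℚ) * y, hsf, ?_, _, ?_, rfl⟩
    · rw [mul_pow, ← hr]
      have h1 : ((r.num.natAbs : ℕ) : ℚ) = r.num := by
        rw [Nat.cast_natAbs, abs_of_pos (Rat.num_pos.2 hrpos)]
      have h2 : (t : ℚ) ^ 2 * s = r.num * r.den := by rw [← h1]; exact_mod_cast hst
      have ht0 : (t : ℚ) ≠ 0 := by exact_mod_cast ht.ne'
      have hd0 : (r.den : ℚ) ≠ 0 := by exact_mod_cast r.den_pos.ne'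
      have h3 : (r.den / t : ℚ) ^ 2 * r = s := by
        have hr' : r * r.den = r.num := Rat.mul_den_eq_num r
        field_simp
        rw [h2, ← hr']; ring
      have h4 := congrArg (Rat.cast : ℚ → L) h3
      rw [Rat.cast_mul, Rat.cast_pow, Rat.cast_natCast] at h4
      exact h4
    · have ht0 : (t : ℚ) ≠ 0 := by exact_mod_cast ht.ne'
      have hd0 : (r.den : ℚ) ≠ 0 := by exact_mod_cast r.den_pos.ne'
      exact div_ne_zero hd0 ht0
  obtain ⟨q, hq0, hq⟩ := hxy
  have hxA : ∀ σ ∈ A, σ x = x := by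
    intro σ hσ
    rw [hq, map_mul, hyA σ hσ]
    simp
  have hs0 : s ≠ 0 := hs.ne_zero
  have hx0 : x ≠ 0 := by
    rintro rfl
    apply hs0
    have : (s : L) = 0 := by rw [← hx]; simp
    exact_mod_cast this
  -- for odd `p ∣ s`, the valuation of `x` is a multiple of that of `p`, contradicting `x ^ 2 = s`
  have hprime : ∀ p, p.Prime → p ∣ s → p = 2 := by
    intro p hp hd
    by_contra hp2
    obtain ⟨d, rfl⟩ := hd
    have hcop : d.Coprime p := by
      rw [Nat.coprime_comm, hp.coprime_iff_not_dvd]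
      rintro ⟨d', rfl⟩
      have := hs p ⟨d', by ring⟩
      rw [Nat.isUnit_iff] at this
      exact hp.one_lt.ne' this
    have h1 : (dval (P p)).v (d : L) = 0 := by
      have hp1 := (coe_mem_B_one (P p) (p : 𝓞 L)).2 (hP p hp)
      exact (DVal.v_eq_zero_of_coprime (by simpa using hp1) hcop).2
    have hd0 : d ≠ 0 := by rintro rfl; simp at hs0
    have h2 := congrArg (dval (P p)).v hx
    have hp0 : (p : L) ≠ 0 := by exact_mod_cast hp.ne_zero
    rw [pow_two, DVal.v_mul _ _ _ hx0 hx0, Nat.cast_mul, DVal.v_mul _ _ _ hp0 (by exact_mod_cast hd0),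
      h1, v_p (P p) hp (hP p hp)] at h2
    obtain ⟨k, hk⟩ := dvd_v_of_fixed (P p) (T := In (P p)) le_rfl (x := x) fun σ hσ => hxA σ (hodd p hp hp2 hσ)
    have hpos : 0 < (Nat.card (In (P p)) : ℤ) := by exact_mod_cast Nat.card_pos
    rw [hk] at h2
    have h3 : (Nat.card (In (P p)) : ℤ) * (2 * k) = Nat.card (In (P p)) * 1 := by linarith
    have := mul_left_cancel₀ hpos.ne' h3
    omega
  have hs2 : s = 1 ∨ s = 2 := by
    by_cases h1 : s = 1
    · exact Or.inl h1
    right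
    have := Nat.eq_prime_pow_of_unique_prime_dvd hs0 fun {p} hp hd => hprime p hp hd
    rw [this] at hs h1 ⊢
    set k := s.primeFactorsList.length
    rcases Nat.lt_or_ge k 2 with hk | hk
    · interval_cases k
      · simp at h1
      · rfl
    · exfalso
      have := hs 2 (by rw [← pow_two]; exact pow_dvd_pow 2 hk)
      simp at this
  refine ⟨x, ?_, hxA⟩
  rcases hs2 with rfl | rfl
  · exfalso
    have hτx : τ x = -x := by rw [hq, map_mul, hyA' τ hτ]; simp
    have : x = 1 ∨ x = -1 := by
      rw [← mul_self_eq_one_iff, ← pow_two]; simpa using hx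
    rcases this with rfl | rfl
    · simp at hτx
      have h2 : (2 : L) = 0 := by linear_combination hτx
      norm_num at h2
    · simp at hτx
      have h2 : (2 : L) = 0 := by linear_combination -hτx
      norm_num at h2
  · simpa using hx

end NFLoc

/-! ### The degree bound -/

namespace NFLoc

open NumberField IsDedekindDomain
open scoped Pointwise

/-- A proper normal subgroup whose quotient is a `2`-group lies in a subgroup of index two. -/
lemma exists_index_two {G : Type*} [Group G] [Finite G] (A : Subgroup G) [A.Normal] (hA : A ≠ ⊤)
    (h2 : ∀ g : G, ∃ n, g ^ 2 ^ n ∈ A) : ∃ B : Subgroup G, A ≤ B ∧ B.index = 2 := by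
  have : Fact (Nat.Prime 2) := ⟨Nat.prime_two⟩
  have hp : IsPGroup 2 (G ⧸ A) := by
    intro g
    obtain ⟨g, rfl⟩ := QuotientGroup.mk_surjective g
    obtain ⟨n, hn⟩ := h2 g
    exact ⟨n, by rw [← QuotientGroup.mk_pow, QuotientGroup.eq_one_iff]; exact hn⟩
  obtain ⟨k, hk⟩ := IsPGroup.iff_card.1 hp
  have hk0 : k ≠ 0 := by
    rintro rfl
    apply hA
    rw [← Subgroup.index_eq_one]
    simpa [Subgroup.index] using hk
  obtain ⟨k, rfl⟩ := Nat.exists_eq_succ_of_ne_zero hk0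
  obtain ⟨K, hK⟩ := Sylow.exists_subgroup_card_pow_prime (G := G ⧸ A) 2 (n := k)
    (by rw [hk]; exact pow_dvd_pow 2 (Nat.le_succ k))
  refine ⟨K.comap (QuotientGroup.mk' A), ?_, ?_⟩
  · intro a ha
    rw [Subgroup.mem_comap, QuotientGroup.mk'_apply, (QuotientGroup.eq_one_iff a).2 ha]
    exact K.one_mem
  · rw [Subgroup.index_comap_of_surjective _ (QuotientGroup.mk'_surjective A)]
    have := K.card_mul_index
    rw [hK, hk, pow_succ] at this
    exact Nat.eq_of_mul_eq_mul_left (by positivity) this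

variable {L : Type*} [Field L] [NumberField L] [IsGalois ℚ L]

/-- The counting bound behind the Kronecker–Weber theorem: an abelian field whose inertia groups are
no larger than those of the `n`-th cyclotomic field has degree at most `φ(n)`. -/
theorem card_gal_le (hcomm : ∀ σ τ : Gal(L/ℚ), σ * τ = τ * σ) (φ : L →+* ℂ) (c : Gal(L/ℚ))
    (hc : ∀ x, φ (c x) = (starRingEnd ℂ) (φ x)) {n : ℕ} (hn : n ≠ 0) (hn2 : 3 ≤ n.factorization 2)
    (hU : ∀ p, p.Prime → ¬ p ∣ n → ∀ v : HeightOneSpectrum (𝓞 L), (p : 𝓞 L) ∈ v.asIdeal → In v = ⊥)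
    (hE : ∀ p, p.Prime → p ≠ 2 → p ∣ n → ∀ v : HeightOneSpectrum (𝓞 L), (p : 𝓞 L) ∈ v.asIdeal →
      ∀ σ ∈ In v, (∃ t, σ ^ p ^ t = 1) → σ ^ p ^ (n.factorization p - 1) = 1)
    (hE2 : ∀ v : HeightOneSpectrum (𝓞 L), (2 : 𝓞 L) ∈ v.asIdeal →
      ∀ σ ∈ In v, σ ^ 2 ^ (n.factorization 2 - 2) = 1) :
    Nat.card Gal(L/ℚ) ≤ n.totient := by
  have hnorm : ∀ B : Subgroup Gal(L/ℚ), B.Normal := fun B =>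
    ⟨fun a ha g => by rw [hcomm g a, mul_inv_cancel_right]; exact ha⟩
  have hex : ∀ p : ℕ, ∃ v : HeightOneSpectrum (𝓞 L), p.Prime → (p : 𝓞 L) ∈ v.asIdeal := by
    intro p
    by_cases hp : p.Prime
    · obtain ⟨v, hv⟩ := exists_place (L := L) hp
      exact ⟨v, fun _ => hv⟩
    · obtain ⟨v, hv⟩ := exists_place (L := L) Nat.prime_two
      exact ⟨v, fun h => absurd h hp⟩
  choose P hP using hex
  have hP2 : (2 : 𝓞 L) ∈ (P 2).asIdeal := by simpa using hP 2 Nat.prime_two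
  set J : Subgroup Gal(L/ℚ) := (n.primeFactors.erase 2).sup fun q => In (P q) with hJ
  have h2n : 2 ∈ n.primeFactors := by
    rw [← Nat.support_factorization, Finsupp.mem_support_iff]; omega
  have hJodd : ∀ p, p.Prime → p ≠ 2 → In (P p) ≤ J := by
    intro p hp hp2
    by_cases hpn : p ∣ n
    · exact Finset.le_sup (f := fun q => In (P q))
        (Finset.mem_erase.2 ⟨hp2, Nat.mem_primeFactors.2 ⟨hp, hpn, hn⟩⟩)
    · rw [hU p hp hpn _ (hP p hp)]; exact bot_le
  have hcardJ : Nat.card J ≤ ∏ q ∈ n.primeFactors.erase 2, q ^ (n.factorization q - 1) * (q - 1) := by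
    refine (card_finset_sup_le hnorm _ _).trans (Finset.prod_le_prod' fun q hq => ?_)
    rw [Finset.mem_erase, Nat.mem_primeFactors] at hq
    obtain ⟨hq2, hq, hqn, -⟩ := hq
    refine card_In_le (P q) hcomm hq ?_ (hP q hq) _ (hE q hq hq2 hqn _ (hP q hq))
    have := hq.two_le
    omega
  have hpow : ∀ g : Gal(L/ℚ), ∃ t, g ^ 2 ^ t ∈ J := by
    have := hnorm (J ⊔ In (P 2))
    have htop : J ⊔ In (P 2) = ⊤ := by
      refine eq_top_of_In_le P hP _ fun p hp => ?_
      by_cases hp2 : p = 2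
      · subst hp2; exact le_sup_right
      · exact (hJodd p hp hp2).trans le_sup_left
    intro g
    have hg : g ∈ J ⊔ In (P 2) := by rw [htop]; trivial
    have := hnorm J
    rw [Subgroup.mem_sup_of_normal_left] at hg
    obtain ⟨a, ha, b, hb, rfl⟩ := hg
    obtain ⟨t, ht⟩ := In_two (P 2) hcomm hP2 hb
    refine ⟨t, ?_⟩
    rw [Commute.mul_pow (hcomm a b), ht, mul_one]
    exact pow_mem ha _
  have hc2 : c ^ 2 = 1 := by
    ext x
    apply φ.injective
    rw [pow_two, AlgEquiv.mul_apply, hc, hc]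
    simp
  have hzc : Nat.card (Subgroup.zpowers c) ≤ 2 := by
    rw [Nat.card_zpowers]; exact orderOf_le_of_pow_eq_one two_pos hc2
  set H := J ⊔ Subgroup.zpowers c with hH
  have hcH : c ∈ H := (le_sup_right : _ ≤ H) (Subgroup.mem_zpowers c)
  have hcardH : Nat.card H ≤ Nat.card J * 2 := by
    have := hnorm (Subgroup.zpowers c)
    exact (card_sup_le _ _).trans (Nat.mul_le_mul_left _ hzc)
  -- every proper subgroup above `H` fixes a square root of two
  have hsqrt : ∀ A : Subgroup Gal(L/ℚ), H ≤ A → A ≠ ⊤ → ∃ x : L, x ^ 2 = 2 ∧ ∀ σ ∈ A, σ x = x := by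
    intro A hA hne
    have := hnorm A
    obtain ⟨B, hAB, hB⟩ := exists_index_two A hne fun g => by
      obtain ⟨t, ht⟩ := hpow g
      exact ⟨t, hA ((le_sup_left : J ≤ H) ht)⟩
    obtain ⟨x, hx, hxB⟩ := exists_sqrt_two P hP φ c hc B hB (hAB (hA hcH)) fun p hp hp2 =>
      (hJodd p hp hp2).trans ((le_sup_left.trans hA).trans hAB)
    exact ⟨x, hx, fun σ hσ => hxB σ (hAB hσ)⟩
  have hbound : Nat.card Gal(L/ℚ) ≤ Nat.card J * (2 * 2 ^ (n.factorization 2 - 2)) := by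
    by_cases hHtop : H = ⊤
    · have h1 : Nat.card H = Nat.card Gal(L/ℚ) := by rw [hHtop]; exact Subgroup.card_top
      rw [← h1]
      refine hcardH.trans (Nat.mul_le_mul_left _ ?_)
      have : 0 < 2 ^ (n.factorization 2 - 2) := by positivity
      omega
    obtain ⟨x, hx, hxH⟩ := hsqrt H le_rfl hHtop
    -- inertia at `2` must move `x`, as `√2` is irrational
    obtain ⟨a, ha, hax⟩ : ∃ a ∈ In (P 2), a x ≠ x := by
      by_contra! h
      let S : Subgroup Gal(L/ℚ) := MulAction.stabilizer Gal(L/ℚ) x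
      have hS : ∀ σ, σ ∈ S ↔ σ x = x := fun σ => Iff.rfl
      have := hnorm S
      have htop : S = ⊤ := eq_top_of_In_le P hP _ fun p hp => by
        by_cases hp2 : p = 2
        · subst hp2; exact fun σ hσ => h σ hσ
        · exact fun σ hσ => hxH σ ((le_sup_left : J ≤ H) (hJodd p hp hp2 hσ))
      have hxb : x ∈ (⊥ : IntermediateField ℚ L) := by
        rw [IsGalois.mem_bot_iff_fixed]
        intro σ
        rw [← hS, htop]; trivial
      rw [IntermediateField.mem_bot] at hxb
      obtain ⟨q, rfl⟩ := hxb
      have hq : q ^ 2 = 2 := by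
        apply (algebraMap ℚ L).injective
        rw [map_pow, hx]; simp
      have hirr := irrational_sqrt_two
      apply hirr
      refine ⟨|q|, ?_⟩
      rw [eq_comm, Real.sqrt_eq_iff_mul_self_eq two_pos.le (by positivity)]
      have h3 : |q| * |q| = 2 := by rw [abs_mul_abs_self, ← pow_two, hq]
      exact_mod_cast h3.symm
    have htop : H ⊔ Subgroup.zpowers a = ⊤ := by
      by_contra hne
      obtain ⟨y, hy, hyA⟩ := hsqrt _ le_sup_left hne
      have hay := hyA a ((le_sup_right : _ ≤ H ⊔ Subgroup.zpowers a) (Subgroup.mem_zpowers a))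
      have hxy : x ^ 2 = y ^ 2 := by rw [hx, hy]
      rcases sq_eq_sq_iff_eq_or_eq_neg.1 hxy with rfl | rfl
      · exact hax hay
      · exact hax (by rw [map_neg, hay])
    have h1 : Nat.card (H ⊔ Subgroup.zpowers a : Subgroup _) = Nat.card Gal(L/ℚ) := by
      rw [htop]; exact Subgroup.card_top
    have hza : Nat.card (Subgroup.zpowers a) ≤ 2 ^ (n.factorization 2 - 2) := by
      rw [Nat.card_zpowers]
      exact orderOf_le_of_pow_eq_one (by positivity) (hE2 (P 2) hP2 a ha)
    rw [← h1, ← mul_assoc]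
    have := hnorm (Subgroup.zpowers a)
    exact (card_sup_le _ _).trans (Nat.mul_le_mul hcardH hza)
  rw [Nat.totient_eq_prod_factorization hn]
  change _ ≤ ∏ q ∈ n.factorization.support, _
  rw [Nat.support_factorization, ← Finset.prod_erase_mul _ _ h2n]
  refine hbound.trans (Nat.mul_le_mul hcardJ ?_)
  rw [← pow_succ']
  simp only [Nat.add_one_sub_one, mul_one]
  exact Nat.pow_le_pow_right two_pos (by omega)

end NFLoc

/-! ### The Kronecker–Weber theorem -/

namespace NFLoc

open NumberField IsDedekindDomain
open scoped Pointwise IntermediateField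

lemma In_eq_bot_of_not_dvd_discr {K : Type*} [Field K] [NumberField K] [IsGalois ℚ K] {p : ℕ} (hp : p.Prime)
    (hd : ¬ p ∣ (discr K).natAbs) (v : HeightOneSpectrum (𝓞 K)) (hpv : (p : 𝓞 K) ∈ v.asIdeal) : In v = ⊥ := by
  have hpi : Prime (p : ℤ) := Nat.prime_iff_prime_int.1 hp
  have hd' : ¬ (p : ℤ) ∣ discr K := by rwa [← Int.natCast_dvd_natCast, Int.dvd_natAbs] at hd
  have h1 := (NumberField.not_dvd_discr_iff_forall_mem K (𝓞 K) hpi).1 hd' v.asIdeal v.isPrime (by simpa using hpv)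
  rw [← Ideal.ramificationIdx_eq_one_iff, ← card_inertia_int_eq Gal(K/ℚ) _ v.ne_bot] at h1
  exact Subgroup.card_eq_one.1 h1

/-- An automorphism of `F(ζ)` fixing `F` and `ζ` is trivial. -/
lemma eq_one_of_fix {L : Type*} [Field L] [Algebra ℚ L] {F : IntermediateField ℚ L} {ζ : L} (htop : F ⊔ ℚ⟮ζ⟯ = ⊤)
    {σ : Gal(L/ℚ)} (hF : σ ∈ F.fixingSubgroup) (hσ : σ ζ = ζ) : σ = 1 := by
  have h1 : σ ∈ (F ⊔ ℚ⟮ζ⟯).fixingSubgroup := by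
    rw [IntermediateField.fixingSubgroup_sup]
    refine ⟨hF, (IntermediateField.mem_fixingSubgroup_iff _ _).2 fun x hx => ?_⟩
    induction hx using IntermediateField.adjoin_induction with
    | mem x hx => rw [Set.mem_singleton_iff.1 hx]; exact hσ
    | algebraMap x => exact σ.commutes x
    | add x y _ _ hx hy => rw [map_add, hx, hy]
    | inv x _ hx => rw [map_inv₀, hx]
    | mul x y _ _ hx hy => rw [map_mul, hx, hy]
  rw [htop, IntermediateField.fixingSubgroup_top] at h1
  exact Subgroup.mem_bot.1 h1

variable {L : Type*} [Field L] [NumberField L] [IsGalois ℚ L]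

/-- The Kronecker–Weber theorem for a subfield `F` of `L`, where `L` is generated by `F` and a root of
unity of sufficiently divisible order. -/
theorem adjoin_root_eq_top (hcomm : ∀ σ τ : Gal(L/ℚ), σ * τ = τ * σ) (φ : L →+* ℂ) (c : Gal(L/ℚ))
    (hc : ∀ x, φ (c x) = (starRingEnd ℂ) (φ x)) (F : IntermediateField ℚ L) [IsGalois ℚ F] {m : ℕ}
    (hm : m = 2 * (discr F).natAbs * Nat.card Gal(F/ℚ)) {ζ : L} (hζ : IsPrimitiveRoot ζ (m ^ 3))
    (htop : F ⊔ ℚ⟮ζ⟯ = ⊤) : ℚ⟮ζ⟯ = ⊤ := by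
  have hm0 : m ≠ 0 := by
    rw [hm]
    have h1 : (discr F).natAbs ≠ 0 := by simpa using discr_ne_zero F
    have h2 : Nat.card Gal(F/ℚ) ≠ 0 := Nat.card_pos.ne'
    positivity
  set n := m ^ 3 with hn
  have hn0 : n ≠ 0 := pow_ne_zero 3 hm0
  have hfac : ∀ p, n.factorization p = 3 * m.factorization p := fun p => by
    rw [hn, Nat.factorization_pow]; rfl
  have hone : ∀ σ : Gal(L/ℚ), σ ∈ F.fixingSubgroup → σ ζ = ζ → σ = 1 := fun σ => eq_one_of_fix htop
  have hpdvd : ∀ p, p.Prime → p ∣ n → 1 ≤ m.factorization p ∧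
      (Nat.card Gal(F/ℚ)).factorization p ≤ m.factorization p := by
    intro p hp hpn
    refine ⟨(hp.dvd_iff_one_le_factorization hm0).1 (hp.dvd_of_dvd_pow hpn), ?_⟩
    exact (Nat.factorization_le_iff_dvd Nat.card_pos.ne' hm0).2 (by rw [hm]; exact dvd_mul_left _ _) p
  -- restricting to `F` kills large powers of elements of `p`-power order
  have hF : ∀ p, p.Prime → p ∣ n → ∀ σ : Gal(L/ℚ), (∃ t, σ ^ p ^ t = 1) → ∀ k,
      (Nat.card Gal(F/ℚ)).factorization p ≤ k → σ ^ p ^ k ∈ F.fixingSubgroup := by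
    rintro p hp hpn σ ⟨t, ht⟩ k hk
    rw [← ker_restrict, MonoidHom.mem_ker, map_pow]
    have h1 : orderOf (AlgEquiv.restrictNormalHom F σ : Gal(F/ℚ)) ∣ p ^ t := by
      rw [orderOf_dvd_iff_pow_eq_one, ← map_pow, ht, map_one]
    have h2 := orderOf_dvd_natCard (AlgEquiv.restrictNormalHom F σ : Gal(F/ℚ))
    obtain ⟨j, -, hj⟩ := (Nat.dvd_prime_pow hp).1 h1
    rw [hj] at h2
    have h3 := (hp.pow_dvd_iff_le_factorization Nat.card_pos.ne').1 h2
    rw [← orderOf_dvd_iff_pow_eq_one, hj]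
    exact pow_dvd_pow p (h3.trans hk)
  have h2n : 2 ∣ n := by
    rw [hn, hm]; exact dvd_pow (by rw [mul_assoc]; exact dvd_mul_right _ _) three_ne_zero
  have hcard : Nat.card Gal(L/ℚ) ≤ n.totient := by
    refine card_gal_le hcomm φ c hc hn0 ?_ ?_ ?_ ?_
    · have := (hpdvd 2 Nat.prime_two h2n).1
      rw [hfac]; omega
    · intro p hp hpn v hv
      rw [eq_bot_iff]
      intro σ hσ
      refine Subgroup.mem_bot.2 (hone σ ?_ ?_)
      · have h1 : ¬ p ∣ (discr F).natAbs := fun h => hpn (by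
          rw [hn, hm]
          exact dvd_pow ((h.mul_left 2).mul_right _) three_ne_zero)
        have h2 := restrict_mem v F hσ
        rw [In_eq_bot_of_not_dvd_discr hp h1 _ (natCast_mem_below v F hv), Subgroup.mem_bot] at h2
        rw [← ker_restrict, MonoidHom.mem_ker]
        exact h2
      · exact fix_root v hp hv ((hp.coprime_iff_not_dvd.2 hpn).symm) hζ.pow_eq_one hσ
    · intro p hp hp2 hpn v hv σ hσ ht
      obtain ⟨h1, h2⟩ := hpdvd p hp hpn
      have h3 := hfac p
      refine hone _ (hF p hp hpn σ ht _ (by omega)) (pow_fix_root v hp hv hn0 hζ hσ ?_)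
      rintro u ⟨χ, rfl⟩
      obtain ⟨t, ht⟩ := ht
      exact unit_pow_odd hp (by omega) _ (t := t) (by rw [← map_pow, ht, map_one])
    · intro v hv σ hσ
      obtain ⟨h1, h2⟩ := hpdvd 2 Nat.prime_two h2n
      have h3 := hfac 2
      refine hone _ (hF 2 Nat.prime_two h2n σ (In_two v hcomm hv hσ) _ (by omega))
        (pow_fix_root v Nat.prime_two (by simpa using hv) hn0 hζ hσ ?_)
      rintro u -
      exact unit_pow_two (by omega) u
  have hint : IsIntegral ℚ ζ := Algebra.IsIntegral.isIntegral ζ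
  apply IntermediateField.eq_of_le_of_finrank_le le_top
  rw [IntermediateField.finrank_top', IntermediateField.adjoin.finrank hint,
    ← Polynomial.cyclotomic_eq_minpoly_rat hζ (Nat.pos_of_ne_zero hn0), Polynomial.natDegree_cyclotomic,
    ← IsGalois.card_aut_eq_finrank]
  exact hcard

end NFLoc

namespace NFLoc

open NumberField IsDedekindDomain
open scoped Pointwise IntermediateField

lemma normal_adjoin_root {n : ℕ} (hn : n ≠ 0) {ζ : ℂ} (hζ : IsPrimitiveRoot ζ n) :
    FiniteDimensional ℚ ℚ⟮ζ⟯ ∧ IsGalois ℚ ℚ⟮ζ⟯ := by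
  have : NeZero n := ⟨hn⟩
  have halg : IsIntegral ℚ ζ := (hζ.isIntegral (Nat.pos_of_ne_zero hn)).tower_top
  have h1 : IsCyclotomicExtension {n} ℚ ℚ⟮ζ⟯ := by
    change IsCyclotomicExtension {n} ℚ (IntermediateField.adjoin ℚ {ζ}).toSubalgebra
    rw [IntermediateField.adjoin_simple_toSubalgebra_of_isAlgebraic halg.isAlgebraic]
    exact hζ.adjoin_isCyclotomicExtension ℚ
  exact ⟨IntermediateField.adjoin.finiteDimensional halg, IsCyclotomicExtension.isGalois {n} ℚ ℚ⟮ζ⟯⟩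

lemma restrict_sup_adjoin {k Ω : Type*} [Field k] [Field Ω] [Algebra k Ω] {E L : IntermediateField k Ω} {ζ : Ω}
    (hEL : E ≤ L) (hL : L = E ⊔ k⟮ζ⟯) (hζL : ζ ∈ L) :
    IntermediateField.restrict hEL ⊔ k⟮(⟨ζ, hζL⟩ : L)⟯ = ⊤ := by
  apply IntermediateField.lift_injective L
  rw [IntermediateField.lift_sup, IntermediateField.lift_top, IntermediateField.lift_adjoin_simple,
    IntermediateField.lift_restrict]
  exact hL.symm

lemma le_adjoin_of_eq_top {k Ω : Type*} [Field k] [Field Ω] [Algebra k Ω] {L : IntermediateField k Ω} {ζ : Ω}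
    (hζL : ζ ∈ L) (h : k⟮(⟨ζ, hζL⟩ : L)⟯ = ⊤) : L ≤ k⟮ζ⟯ := by
  have h2 := congrArg IntermediateField.lift h
  rw [IntermediateField.lift_adjoin_simple, IntermediateField.lift_top] at h2
  exact h2.symm.le

lemma normal_sup_of {k Ω : Type*} [Field k] [Field Ω] [Algebra k Ω] {E E' : IntermediateField k Ω}
    (h1 : Normal k E) (h2 : Normal k E') : Normal k (E ⊔ E' : IntermediateField k Ω) :=
  IntermediateField.normal_sup k Ω E E'

/-- If `F` is abelian over `ℚ`, then so is `F(ζ)` for a root of unity `ζ`. -/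
lemma comm_of_top {L : Type*} [Field L] [NumberField L] [IsGalois ℚ L] (F : IntermediateField ℚ L) [IsGalois ℚ F]
    (hF : ∀ σ τ : Gal(F/ℚ), σ * τ = τ * σ) {n : ℕ} {ζ : L} (hn : n ≠ 0) (hζ : IsPrimitiveRoot ζ n)
    (htop : F ⊔ ℚ⟮ζ⟯ = ⊤) (σ τ : Gal(L/ℚ)) : σ * τ = τ * σ := by
  have hroot : ∀ y : L, y ^ n = 1 → σ (τ y) = τ (σ y) := by
    intro y hy
    have : NeZero n := ⟨hn⟩
    obtain ⟨k, -, rfl⟩ := hζ.eq_pow_of_pow_eq_one hy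
    obtain ⟨a, -, ha⟩ := hζ.eq_pow_of_pow_eq_one (ξ := σ ζ) (by rw [← map_pow, hζ.pow_eq_one, map_one])
    obtain ⟨b, -, hb⟩ := hζ.eq_pow_of_pow_eq_one (ξ := τ ζ) (by rw [← map_pow, hζ.pow_eq_one, map_one])
    simp only [map_pow, ← ha, ← hb]
    rw [← pow_mul, ← pow_mul, ← pow_mul, ← pow_mul]; congr 1; ring
  rw [← mul_inv_eq_one]
  apply eq_one_of_fix htop
  · rw [← ker_restrict, MonoidHom.mem_ker, map_mul, map_inv, map_mul, map_mul,
      hF (AlgEquiv.restrictNormalHom F σ), mul_inv_cancel]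
  · have h1 : ((τ * σ)⁻¹ ζ) ^ n = 1 := by rw [← map_pow, hζ.pow_eq_one, map_one]
    rw [AlgEquiv.mul_apply, AlgEquiv.mul_apply, hroot _ h1, ← AlgEquiv.mul_apply, ← AlgEquiv.mul_apply,
      mul_inv_cancel]
    rfl

/-- The Kronecker–Weber theorem for finite abelian extensions of `ℚ` inside `ℂ`. -/
theorem kronecker_weber (E : IntermediateField ℚ ℂ) [FiniteDimensional ℚ E] [IsGalois ℚ E]
    (hcomm : ∀ σ τ : Gal(E/ℚ), σ * τ = τ * σ) :
    ∃ (ζ : ℂ) (n : ℕ), 1 ≤ n ∧ ζ ^ n = 1 ∧ E ≤ ℚ⟮ζ⟯ := by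
  have : NumberField E := ⟨⟩
  set m := 2 * (discr E).natAbs * Nat.card Gal(E/ℚ) with hm
  have hm0 : m ≠ 0 := by
    rw [hm]
    have h1 : (discr E).natAbs ≠ 0 := by simpa using discr_ne_zero E
    have h2 : Nat.card Gal(E/ℚ) ≠ 0 := Nat.card_pos.ne'
    positivity
  have hn0 : m ^ 3 ≠ 0 := pow_ne_zero 3 hm0
  obtain ⟨ζ, hζ⟩ : ∃ ζ : ℂ, IsPrimitiveRoot ζ (m ^ 3) := ⟨_, Complex.isPrimitiveRoot_exp _ hn0⟩
  obtain ⟨hfd, hgal⟩ := normal_adjoin_root hn0 hζ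
  refine ⟨ζ, m ^ 3, Nat.one_le_iff_ne_zero.2 hn0, hζ.pow_eq_one, ?_⟩
  set L := E ⊔ ℚ⟮ζ⟯ with hL
  have hEL : E ≤ L := le_sup_left
  have hfdL : FiniteDimensional ℚ L := IntermediateField.finiteDimensional_sup E ℚ⟮ζ⟯
  have hN : Normal ℚ L := by
    have h1 : Normal ℚ E := inferInstance
    have h2 : Normal ℚ ℚ⟮ζ⟯ := inferInstance
    exact normal_sup_of h1 h2
  have hG : IsGalois ℚ L := { to_normal := hN }
  have hNF : NumberField L := ⟨⟩
  set F : IntermediateField ℚ L := IntermediateField.restrict hEL with hF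
  let e : E ≃ₐ[ℚ] F := IntermediateField.restrictAlgEquiv hEL
  have hGF : IsGalois ℚ F := IsGalois.of_algEquiv e
  have hζL : ζ ∈ L := (le_sup_right : ℚ⟮ζ⟯ ≤ L) (IntermediateField.mem_adjoin_simple_self ℚ ζ)
  have hζ' : IsPrimitiveRoot (⟨ζ, hζL⟩ : L) (m ^ 3) :=
    IsPrimitiveRoot.of_map_of_injective (f := algebraMap L ℂ) hζ (algebraMap L ℂ).injective
  have htop : F ⊔ ℚ⟮(⟨ζ, hζL⟩ : L)⟯ = ⊤ := restrict_sup_adjoin hEL hL hζL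
  have hcommF : ∀ σ τ : Gal(F/ℚ), σ * τ = τ * σ := by
    intro σ τ
    apply (AlgEquiv.autCongr e.symm).injective
    rw [map_mul, map_mul, hcomm]
  have hmF : m = 2 * (discr F).natAbs * Nat.card Gal(F/ℚ) := by
    rw [hm, NumberField.discr_eq_discr_of_algEquiv E e, Nat.card_congr (AlgEquiv.autCongr e).toEquiv]
  have key := adjoin_root_eq_top (comm_of_top F hcommF hn0 hζ' htop) (algebraMap L ℂ)
    ((Complex.conjAe.restrictScalars ℚ).restrictNormal L)
    (fun x => AlgEquiv.restrictNormal_commutes (Complex.conjAe.restrictScalars ℚ) L x) F hmF hζ' htop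
  exact hEL.trans (le_adjoin_of_eq_top hζL key)

end NFLoc

/-! ### The field of entries of the S-matrix -/

namespace ModularData

open scoped IntermediateField

/-- An algebraic extension stable under all embeddings in an algebraically closed field is normal. -/
lemma normal_of_map_mem {k Ω : Type*} [Field k] [Field Ω] [Algebra k Ω] [IsAlgClosed Ω] (E : IntermediateField k Ω)
    [Algebra.IsAlgebraic k E] (h : ∀ (ψ : E →ₐ[k] Ω) (x : E), ψ x ∈ E) : Normal k E := by
  refine ⟨fun x => IntermediateField.splits_of_splits (IsAlgClosed.splits _) fun y hy => ?_⟩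
  rw [← Algebra.IsAlgebraic.range_eval_eq_rootSet_minpoly Ω x] at hy
  obtain ⟨ψ, rfl⟩ := hy
  exact h ψ x

lemma map_mem_of_gen {k Ω : Type*} [Field k] [Field Ω] [Algebra k Ω] {S : Set Ω}
    (ψ : IntermediateField.adjoin k S →ₐ[k] Ω)
    (h : ∀ x (hx : x ∈ S), ψ ⟨x, IntermediateField.subset_adjoin k S hx⟩ ∈ IntermediateField.adjoin k S)
    (x : IntermediateField.adjoin k S) : ψ x ∈ IntermediateField.adjoin k S := by
  obtain ⟨x, hx⟩ := x
  induction hx using IntermediateField.adjoin_induction with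
  | mem x hx => exact h x hx
  | algebraMap x =>
    have : ψ (algebraMap k _ x) = algebraMap k Ω x := ψ.commutes x
    have h1 : ψ (algebraMap k _ x) ∈ IntermediateField.adjoin k S := by
      rw [this]; exact (IntermediateField.adjoin k S).algebraMap_mem x
    exact h1
  | add x y hx hy h1 h2 =>
    have : ψ (⟨x, hx⟩ + ⟨y, hy⟩) ∈ IntermediateField.adjoin k S := by rw [map_add]; exact add_mem h1 h2
    exact this
  | inv x hx h1 =>
    have : ψ (⟨x, hx⟩⁻¹) ∈ IntermediateField.adjoin k S := by rw [map_inv₀]; exact inv_mem h1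
    exact this
  | mul x y hx hy h1 h2 =>
    have : ψ (⟨x, hx⟩ * ⟨y, hy⟩) ∈ IntermediateField.adjoin k S := by rw [map_mul]; exact mul_mem h1 h2
    exact this

lemma algEquiv_ext_of_gen {k Ω : Type*} [Field k] [Field Ω] [Algebra k Ω] {S : Set Ω}
    {σ τ : Gal(IntermediateField.adjoin k S/k)}
    (h : ∀ x (hx : x ∈ S), σ ⟨x, IntermediateField.subset_adjoin k S hx⟩ =
      τ ⟨x, IntermediateField.subset_adjoin k S hx⟩) : σ = τ := by
  have : σ.toAlgHom = τ.toAlgHom := IntermediateField.algHom_ext_of_eq_adjoin k rfl h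
  exact AlgEquiv.ext fun x => DFunLike.congr_fun this x

variable {I : Type} [Fintype I] [DecidableEq I] (M : ModularData I)

/-- The character of the fusion ring given by the `j`-th column of the S-matrix. -/
noncomputable def chi (j i : I) : ℂ := M.s i j / M.s M.one j

lemma chi_one (j : I) : M.chi j M.one = 1 := div_self (M.s_one_ne_zero j)

lemma chi_mul (r i j : I) : M.chi r i * M.chi r j = ∑ k, (M.N i j k : ℂ) * M.chi r k := by
  have h0 := M.s_one_ne_zero r
  have h := M.verlinde i j r
  have h1 : ∑ k, (M.N i j k : ℂ) * M.chi r k = (∑ k, (M.N i j k : ℂ) * M.s k r) / M.s M.one r := by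
    simp only [chi, ← mul_div_assoc, ← Finset.sum_div]
  rw [h1, chi, chi, div_mul_div_comm, ← h]
  field_simp

lemma s_eq (i j : I) : M.s i j = M.s M.one j * M.chi j i := by
  have h0 := M.s_one_ne_zero j
  rw [chi]; field_simp

/-- The equation determining `s 0 j` up to sign from the character `χ_j`. -/
lemma sq_mul_sum (j : I) : M.s M.one j ^ 2 * ∑ k, M.chi j k * M.chi j (M.star k) = 1 := by
  have h := M.s_mul_s j (M.star j)
  rw [if_pos rfl] at h
  rw [← h, Finset.mul_sum]
  refine Finset.sum_congr rfl fun k _ => ?_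
  rw [M.s_star k (M.star j), M.star_involutive j, M.s_symm j k, M.s_eq k j, M.s_eq (M.star k) j]
  ring

/-- Multiplication by `χ_j(i)` preserves the finitely generated group spanned by the values of `χ_j`. -/
lemma isIntegral_chi (j i : I) : IsIntegral ℤ (M.chi j i) := by
  refine isIntegral_of_smul_mem_submodule (Submodule.span ℤ (Set.range (M.chi j))) ?_
    (Submodule.fg_span (Set.finite_range _)) _ ?_
  · intro h
    have h1 : M.chi j M.one ∈ Submodule.span ℤ (Set.range (M.chi j)) := Submodule.subset_span ⟨_, rfl⟩
    rw [h, Submodule.mem_bot, chi_one] at h1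
    exact one_ne_zero h1
  · intro n hn
    induction hn using Submodule.span_induction with
    | mem x hx =>
      obtain ⟨l, rfl⟩ := hx
      rw [smul_eq_mul, chi_mul]
      refine Submodule.sum_mem _ fun k _ => ?_
      have := Submodule.smul_mem (Submodule.span ℤ (Set.range (M.chi j))) (M.N i l k : ℤ)
        (Submodule.subset_span (Set.mem_range_self k))
      simpa using this
    | zero => simp
    | add x y _ _ hx hy => rw [smul_add]; exact add_mem hx hy
    | smul a x _ hx => rw [smul_comm]; exact Submodule.smul_mem _ _ hx

lemma isIntegral_s (i j : I) : IsIntegral ℚ (M.s i j) := by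
  have hchi : ∀ i, IsIntegral ℚ (M.chi j i) := fun i => (M.isIntegral_chi j i).tower_top
  rw [s_eq]
  refine IsIntegral.mul ?_ (hchi i)
  apply IsIntegral.of_pow two_pos
  rw [eq_inv_of_mul_eq_one_left (M.sq_mul_sum j)]
  exact IsIntegral.inv (IsIntegral.sum _ fun k _ => (hchi k).mul (hchi _))

/-- The set of entries of the S-matrix. -/
def entries : Set ℂ := Set.range fun x : I × I => M.s x.1 x.2

/-- The field generated by the entries of the S-matrix. -/
noncomputable def field : IntermediateField ℚ ℂ := IntermediateField.adjoin ℚ M.entries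

lemma mem_field (i j : I) : M.s i j ∈ M.field := IntermediateField.subset_adjoin _ _ ⟨(i, j), rfl⟩

/-- An entry of the S-matrix as an element of the field generated by all entries. -/
noncomputable def s' (i j : I) : M.field := ⟨M.s i j, M.mem_field i j⟩

/-- Field embeddings permute the columns of the S-matrix up to sign. -/
lemma galois_action (ψ : M.field →+* ℂ) :
    ∃ (π : I → I) (ε : I → ℤ), ∀ i j, ψ (M.s' i j) = ε j * M.s i (π j) := by
  have hne : ∀ j, M.s' M.one j ≠ 0 := fun j h => M.s_one_ne_zero j (congrArg Subtype.val h)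
  have hcol : ∀ j, ∃ j', ∀ i, ψ (M.s' i j / M.s' M.one j) = M.chi j' i := by
    intro j
    refine M.char_column (fun i => ψ (M.s' i j / M.s' M.one j)) ?_ ?_
    · rw [div_self (hne j), map_one]
    · intro i l
      have h : M.s' i j / M.s' M.one j * (M.s' l j / M.s' M.one j) =
          ∑ k, (M.N i l k : M.field) * (M.s' k j / M.s' M.one j) := by
        apply Subtype.val_injective
        have h1 := M.chi_mul j i l
        have h2 : ((∑ k, (M.N i l k : M.field) * (M.s' k j / M.s' M.one j) : M.field) : ℂ) =
            ∑ k, (M.N i l k : ℂ) * M.chi j k := by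
          change algebraMap M.field ℂ _ = _
          rw [map_sum]
          refine Finset.sum_congr rfl fun k _ => ?_
          rw [map_mul, map_natCast]
          rfl
        exact h1.trans h2.symm
      rw [← map_mul, h, map_sum]
      refine Finset.sum_congr rfl fun k _ => ?_
      rw [map_mul, map_natCast]
  choose π hπ using hcol
  have hsq : ∀ j, ψ (M.s' M.one j) ^ 2 = M.s M.one (π j) ^ 2 := by
    intro j
    have h1 : M.s' M.one j ^ 2 *
        ∑ k, M.s' k j / M.s' M.one j * (M.s' (M.star k) j / M.s' M.one j) = 1 := by
      apply (algebraMap M.field ℂ).injective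
      rw [map_one, ← M.sq_mul_sum j, map_mul, map_sum]
      rfl
    have h2 := congrArg ψ h1
    rw [map_one, map_mul, map_sum, map_pow] at h2
    simp only [map_mul, hπ] at h2
    have h3 := M.sq_mul_sum (π j)
    exact (eq_inv_of_mul_eq_one_left h2).trans (eq_inv_of_mul_eq_one_left h3).symm
  have hsign : ∀ j, ∃ ε : ℤ, ψ (M.s' M.one j) = ε * M.s M.one (π j) := by
    intro j
    rcases sq_eq_sq_iff_eq_or_eq_neg.1 (hsq j) with h | h
    · exact ⟨1, by rw [h]; simp⟩
    · exact ⟨-1, by rw [h]; simp⟩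
  choose ε hε using hsign
  refine ⟨π, ε, fun i j => ?_⟩
  have h1 : M.s' i j = M.s' M.one j * (M.s' i j / M.s' M.one j) := by
    rw [mul_div_cancel₀ _ (hne j)]
  rw [h1, map_mul, hπ, hε, mul_assoc, ← M.s_eq]

lemma finiteDimensional_field : FiniteDimensional ℚ M.field := by
  have : Finite M.entries := Set.finite_range _
  refine IntermediateField.finiteDimensional_adjoin ?_
  rintro _ ⟨⟨i, j⟩, rfl⟩
  exact M.isIntegral_s i j

lemma isGalois_field : IsGalois ℚ M.field := by
  have := M.finiteDimensional_field
  have hN : Normal ℚ M.field := by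
    refine normal_of_map_mem M.field fun ψ x => map_mem_of_gen ψ ?_ x
    rintro _ ⟨⟨i, j⟩, rfl⟩
    obtain ⟨π, ε, h⟩ := M.galois_action ψ.toRingHom
    have h1 : ψ (M.s' i j) ∈ M.field := by
      have h2 : ψ (M.s' i j) = ε j * M.s i (π j) := h i j
      rw [h2]
      exact mul_mem (intCast_mem _ _) (M.mem_field _ _)
    exact h1
  exact { to_normal := hN }

/-- By symmetry of `s`, one automorphism acts on the column index and the other on the row index. -/
lemma comm_field (σ τ : Gal(M.field/ℚ)) : σ * τ = τ * σ := by
  have key : ∀ σ : Gal(M.field/ℚ), ∃ (π : I → I) (ε : I → ℤ), ∀ i j, σ (M.s' i j) = ε j * M.s' i (π j) := by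
    intro σ
    obtain ⟨π, ε, h⟩ := M.galois_action ((algebraMap M.field ℂ).comp σ.toAlgHom.toRingHom)
    refine ⟨π, ε, fun i j => (algebraMap M.field ℂ).injective ?_⟩
    refine (h i j).trans ?_
    rw [map_mul, map_intCast]
    rfl
  have hsymm : ∀ i j, M.s' i j = M.s' j i := fun i j => Subtype.val_injective (M.s_symm i j)
  obtain ⟨π, ε, hσ⟩ := key σ
  obtain ⟨π', ε', hτ⟩ := key τ
  refine algEquiv_ext_of_gen ?_
  rintro _ ⟨⟨i, j⟩, rfl⟩
  change σ (τ (M.s' i j)) = τ (σ (M.s' i j))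
  rw [hτ, map_mul, map_intCast, hsymm i, hσ, hsymm i j, hσ, map_mul, map_intCast, hsymm j, hτ,
    hsymm (π' j)]
  ring

end ModularData

/-- All entries of the S-matrix of modular data lie in a cyclotomic field: there is a
root of unity `ξ` such that every `s i j` lies in `ℚ(ξ)`. -/
theorem smatrix_entries_in_cyclotomic_field {I : Type} [Fintype I] [DecidableEq I]
    (M : ModularData I) :
    ∃ ξ : ℂ, (∃ n : ℕ, 1 ≤ n ∧ ξ ^ n = 1) ∧
      ∀ i j, M.s i j ∈ Algebra.adjoin ℚ ({ξ} : Set ℂ) := by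
  have := M.finiteDimensional_field
  have := M.isGalois_field
  obtain ⟨ζ, n, hn, hζ, hle⟩ := NFLoc.kronecker_weber M.field M.comm_field
  refine ⟨ζ, ⟨n, hn, hζ⟩, fun i j => ?_⟩
  have halg : IsAlgebraic ℚ ζ := by
    apply IsIntegral.isAlgebraic
    exact IsIntegral.of_pow hn (hζ ▸ isIntegral_one)
  rw [← IntermediateField.adjoin_simple_toSubalgebra_of_isAlgebraic halg]
  exact hle (M.mem_field i j)
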